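/- arXiv:2011.08646 — 3 statements merged into one kernel-verified Lean document; each statement's English description precedes it below -/
import Mathlib

section
/- Let 0 → A →f→ B →g→ C → 0 be an almost split sequence in C, let b : P → C be a projective cover with kernel i : Ω(C) → P, let b' : P → B be a lifting of b through g, and let h : Ω(C) → A⊕P be the kernel of [f b'] : A⊕P → B. Then the sequence 0 → (0 → A) → (Ω(C) →h→ A⊕P) → (Ω(C) →i→ P) → 0 in S(C), with morphisms (0, [1 0]^t) and (1, [0 1]), is an almost split sequence in S(C); i.e. it is the almost split sequence in S(C) starting at (0 → A). -/
open CategoryTheory CategoryTheory.Limits Opposite ZeroObject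

universe v u

/-- A short exact sequence `0 → X → Y → Z → 0` in an abelian category. -/
structure IsSES {C : Type u} [Category.{v} C] [Abelian C] {X Y Z : C}
    (f : X ⟶ Y) (g : Y ⟶ Z) : Prop where
  mono : Mono f
  epi : Epi g
  w : f ≫ g = 0
  ex : (ShortComplex.mk f g w).Exact

/-- `u` is not a section (a split monomorphism). -/
def IsSection {C : Type u} [Category.{v} C] {X Y : C} (u : X ⟶ Y) : Prop :=
  ∃ r : Y ⟶ X, u ≫ r = 𝟙 X

/-- `v` is not a retraction (a split epimorphism). -/
def IsRetractionHom {C : Type u} [Category.{v} C] {Y Z : C} (v : Y ⟶ Z) : Prop :=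
  ∃ s : Z ⟶ Y, s ≫ v = 𝟙 Z

/-- `u : X → Y` is minimal left almost split in the subcategory of `C` determined by the
predicate `P`:  `u` is not a section, every non-section `X → W` with `W` in the
subcategory factors through `u`, and every `h` with `h ∘ u = u` is an automorphism. -/
def MinLAS {C : Type u} [Category.{v} C] (P : C → Prop) {X Y : C} (u : X ⟶ Y) : Prop :=
  (¬ IsSection u) ∧
  (∀ W : C, P W → ∀ f : X ⟶ W, ¬ IsSection f → ∃ t : Y ⟶ W, u ≫ t = f) ∧
  (∀ h : Y ⟶ Y, u ≫ h = u → IsIso h)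

/-- `v : Y → Z` is minimal right almost split in the subcategory of `C` determined by
`P`. -/
def MinRAS {C : Type u} [Category.{v} C] (P : C → Prop) {Y Z : C} (v : Y ⟶ Z) : Prop :=
  (¬ IsRetractionHom v) ∧
  (∀ W : C, P W → ∀ f : W ⟶ Z, ¬ IsRetractionHom f → ∃ t : W ⟶ Y, t ≫ v = f) ∧
  (∀ h : Y ⟶ Y, h ≫ v = v → IsIso h)

/-- `0 → X → Y → Z → 0` is an almost split sequence in the extension-closed subcategory of
the abelian category `C` determined by the predicate `P`. -/
def IsASSGen {C : Type u} [Category.{v} C] [Abelian C] (P : C → Prop) {X Y Z : C}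
    (u : X ⟶ Y) (v : Y ⟶ Z) : Prop :=
  P X ∧ P Y ∧ P Z ∧ IsSES u v ∧ MinLAS P u ∧ MinRAS P v

/-- A short exact sequence in the morphism category `H(C)` of an abelian category `C`,
i.e. a componentwise short exact sequence. -/
def ArrowSES {C : Type u} [Category.{v} C] [Abelian C] {X Y Z : Arrow C}
    (u : X ⟶ Y) (v : Y ⟶ Z) : Prop :=
  IsSES u.left v.left ∧ IsSES u.right v.right

/-- `0 → X → Y → Z → 0` is an almost split sequence in the (extension-closed) subcategory
of the morphism category `H(C)` determined by the predicate `P`. -/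
def IsASSArrow {C : Type u} [Category.{v} C] [Abelian C] (P : Arrow C → Prop)
    {X Y Z : Arrow C} (u : X ⟶ Y) (v : Y ⟶ Z) : Prop :=
  P X ∧ P Y ∧ P Z ∧ ArrowSES u v ∧ MinLAS P u ∧ MinRAS P v

/-- A Krull–Schmidt category: every object is a finite direct sum of objects with local
endomorphism rings. -/
def IsKrullSchmidt (C : Type u) [Category.{v} C] [Abelian C] : Prop :=
  letI : HasFiniteBiproducts C := Abelian.hasFiniteBiproducts (C := C)
  ∀ X : C, ∃ (n : ℕ) (f : Fin n → C),
    (∀ i, IsLocalRing (End (f i))) ∧ Nonempty (X ≅ ⨁ f)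

/-!
A morphism of `S(C)` is determined by its right component, and a morphism between the right ends
extends to `S(C)` exactly when it descends to the cokernels. So questions about `(Ω(C) → A ⊞ P)`,
whose cokernel is `B`, and `(Ω(C) → P)`, whose cokernel is `C`, can be moved to the cokernels. A
morphism from `(0 → A)` is a section if and only if its composite with the cokernel projection is.
A morphism to `(Ω(C) → P)` is a retraction if and only if the induced map of cokernels is, because
`P → C` is a projective cover. An endomorphism is invertible as soon as it is so on one end and on
the cokernel. On cokernels the two morphisms of the sequence become `f` and `g`, so everything
reduces to the almost split properties of `0 → A → B → C → 0`.
-/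

namespace IsSES

variable {C : Type u} [Category.{v} C] [Abelian C] {X Y Z X' Y' Z' : C}
  {f : X ⟶ Y} {g : Y ⟶ Z} {f' : X' ⟶ Y'} {g' : Y' ⟶ Z'}

theorem exists_lift (h : IsSES f g) {W : C} (x : W ⟶ Y) (hx : x ≫ g = 0) :
    ∃ y : W ⟶ X, y ≫ f = x :=
  have : Mono (ShortComplex.mk f g h.w).f := h.mono
  ⟨h.ex.lift x hx, h.ex.lift_f x hx⟩

theorem exists_desc (h : IsSES f g) {W : C} (x : Y ⟶ W) (hx : f ≫ x = 0) :
    ∃ y : Z ⟶ W, g ≫ y = x :=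
  have : Epi (ShortComplex.mk f g h.w).g := h.epi
  ⟨h.ex.desc x hx, h.ex.g_desc x hx⟩

theorem of_isLimit_kernelFork [Epi g] (w : f ≫ g = 0) (hf : IsLimit (KernelFork.ofι f w)) :
    IsSES f g :=
  ⟨mono_of_isLimit_fork hf, ‹_›, w, ShortComplex.exact_of_f_is_kernel _ hf⟩

theorem cokernel_π (f : X ⟶ Y) [Mono f] : IsSES f (cokernel.π f) :=
  ⟨‹_›, inferInstance, cokernel.condition f,
    ShortComplex.exact_of_g_is_cokernel _ (cokernelIsCokernel f)⟩

theorem biprod_inl_snd (X Y : C) : IsSES (biprod.inl : X ⟶ X ⊞ Y) biprod.snd :=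
  ⟨inferInstance, inferInstance, BinaryBicone.inl_snd _,
    (ShortComplex.Splitting.ofHasBinaryBiproduct X Y).exact⟩

theorem zero_id (X : C) : IsSES (0 : 0 ⟶ X) (𝟙 X) :=
  ⟨(isZero_zero C).mono _, inferInstance, zero_comp,
    (ShortComplex.exact_iff_mono _ rfl).2 (inferInstanceAs (Mono (𝟙 X)))⟩

theorem isIso₁ (h : IsSES f g) (h' : IsSES f' g') {a : X ⟶ X'} {e : Y ⟶ Y'} {c : Z ⟶ Z'}
    (w : a ≫ f' = f ≫ e) (w' : e ≫ g' = g ≫ c) [IsIso e] [IsIso c] : IsIso a := by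
  let φ : ShortComplex.mk f g h.w ⟶ ShortComplex.mk f' g' h'.w :=
    { τ₁ := a, τ₂ := e, τ₃ := c, comm₁₂ := w, comm₂₃ := w' }
  have := h.mono
  have : Mono a := mono_of_mono_fac w
  have : Epi a := ShortComplex.epi_of_mono_of_epi_of_mono φ h.ex h'.mono
    (inferInstanceAs (Epi e)) (inferInstanceAs (Mono c))
  exact isIso_of_mono_of_epi a

theorem isIso₂ (h : IsSES f g) (h' : IsSES f' g') {a : X ⟶ X'} {e : Y ⟶ Y'} {c : Z ⟶ Z'}
    (w : a ≫ f' = f ≫ e) (w' : e ≫ g' = g ≫ c) [ha : IsIso a] [hc : IsIso c] : IsIso e := by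
  let φ : ShortComplex.mk f g h.w ⟶ ShortComplex.mk f' g' h'.w :=
    { τ₁ := a, τ₂ := e, τ₃ := c, comm₁₂ := w, comm₂₃ := w' }
  have : IsIso φ.τ₁ := ha
  have : IsIso φ.τ₃ := hc
  exact ShortComplex.isIso₂_of_shortExact_of_isIso₁₃ φ
    { exact := h.ex, mono_f := h.mono, epi_g := h.epi }
    { exact := h'.ex, mono_f := h'.mono, epi_g := h'.epi }

theorem isIso₃ (h : IsSES f g) (h' : IsSES f' g') {a : X ⟶ X'} {e : Y ⟶ Y'} {c : Z ⟶ Z'}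
    (w : a ≫ f' = f ≫ e) (w' : e ≫ g' = g ≫ c) [IsIso a] [IsIso e] : IsIso c := by
  let φ : ShortComplex.mk f g h.w ⟶ ShortComplex.mk f' g' h'.w :=
    { τ₁ := a, τ₂ := e, τ₃ := c, comm₁₂ := w, comm₂₃ := w' }
  have := h'.epi
  have : Epi c := epi_of_epi_fac w'.symm
  have : Mono c := ShortComplex.mono_of_epi_of_epi_of_mono φ h'.ex h.epi
    (inferInstanceAs (Epi a)) (inferInstanceAs (Mono e))
  exact isIso_of_mono_of_epi c

theorem epi_biprod_desc (h : IsSES f g) {P : C} (b : P ⟶ Y) [Epi (b ≫ g)] :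
    Epi (biprod.desc f b) := by
  refine Preadditive.epi_of_cancel_zero _ fun {W} x hx => ?_
  have hfx : f ≫ x = 0 := by rw [← biprod.inl_desc_assoc f b, hx, comp_zero]
  have hbx : b ≫ x = 0 := by rw [← biprod.inr_desc_assoc f b, hx, comp_zero]
  obtain ⟨y, rfl⟩ := h.exists_desc x hfx
  have hy : y = 0 := zero_of_epi_comp (b ≫ g) ((Category.assoc _ _ _).trans hbx)
  rw [hy, comp_zero]

end IsSES

/-- A right minimal morphism. A projective cover is encoded as a right minimal epimorphism from a
projective object. -/
def IsRightMinimal {C : Type u} [Category.{v} C] {X Y : C} (b : X ⟶ Y) : Prop :=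
  ∀ e : X ⟶ X, e ≫ b = b → IsIso e

theorem IsRightMinimal.isIso_of_comp_eq_comp {C : Type u} [Category.{v} C] {P Z : C} {b : P ⟶ Z}
    (hb : IsRightMinimal b) [Projective P] [Epi b] {e : P ⟶ P} {c : Z ⟶ Z} [IsIso c]
    (h : e ≫ b = b ≫ c) : IsIso e := by
  let p : P ⟶ P := Projective.factorThru (b ≫ inv c) b
  have hp : p ≫ b = b ≫ inv c := Projective.factorThru_comp _ _
  have : IsIso (e ≫ p) := hb _ (by rw [Category.assoc, hp, reassoc_of% h]; simp)
  have : IsIso (p ≫ e) := hb _ (by rw [Category.assoc, h, reassoc_of% hp]; simp)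
  have : Mono e := mono_of_mono e p
  have : IsSplitEpi e := ⟨⟨inv (p ≫ e) ≫ p, by simp⟩⟩
  exact isIso_of_mono_of_isSplitEpi e

section ArrowCokernel

variable {C : Type u} [Category.{v} C]

theorem arrow_hom_ext_of_mono {X Y : Arrow C} [Mono Y.hom] {φ ψ : X ⟶ Y}
    (h : φ.right = ψ.right) : φ = ψ :=
  Arrow.hom_ext _ _ (by rw [← cancel_mono Y.hom, Arrow.w, Arrow.w, h]) h

variable [Abelian C] {X Y : Arrow C} {Q R : C} {p : X.right ⟶ Q} {q : Y.right ⟶ R}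

namespace IsSES

theorem exists_cokernel_map (hX : IsSES X.hom p) (hq : Y.hom ≫ q = 0) (φ : X ⟶ Y) :
    ∃ c : Q ⟶ R, p ≫ c = φ.right ≫ q :=
  hX.exists_desc _ (by rw [← Arrow.w_assoc, hq, comp_zero])

theorem exists_arrow_hom (hp : X.hom ≫ p = 0) (hY : IsSES Y.hom q) (β : X.right ⟶ Y.right)
    {c : Q ⟶ R} (hc : β ≫ q = p ≫ c) : ∃ φ : X ⟶ Y, φ.right = β := by
  obtain ⟨α, hα⟩ := hY.exists_lift (X.hom ≫ β) (by
    rw [Category.assoc, hc, reassoc_of% hp, zero_comp])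
  exact ⟨Arrow.homMk α β hα, rfl⟩

theorem isIso_of_isIso_right_of_isIso_cokernel (hX : IsSES X.hom p) (hY : IsSES Y.hom q)
    (φ : X ⟶ Y) {c : Q ⟶ R} (hc : p ≫ c = φ.right ≫ q) [IsIso φ.right] [IsIso c] : IsIso φ :=
  have : IsIso φ.left := hX.isIso₁ hY (Arrow.w φ) hc.symm
  Arrow.isIso_of_isIso_left_of_isIso_right φ

theorem isIso_of_isIso_left_of_isIso_cokernel (hX : IsSES X.hom p) (hY : IsSES Y.hom q)
    (φ : X ⟶ Y) {c : Q ⟶ R} (hc : p ≫ c = φ.right ≫ q) [IsIso φ.left] [IsIso c] : IsIso φ :=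
  have : IsIso φ.right := hX.isIso₂ hY (Arrow.w φ) hc.symm
  Arrow.isIso_of_isIso_left_of_isIso_right φ

theorem isSection_iff (hX : IsSES X.hom p) {A : C} (φ : Arrow.mk (0 : (0 : C) ⟶ A) ⟶ X) :
    IsSection φ ↔ IsSection (φ.right ≫ p) := by
  constructor
  · rintro ⟨r, hr⟩
    have hrr : φ.right ≫ r.right = 𝟙 A := congrArg CommaMorphism.right hr
    obtain ⟨t, ht⟩ := hX.exists_desc r.right (by rw [← Arrow.w r]; exact comp_zero)
    exact ⟨t, by rw [Category.assoc, ht, hrr]; rfl⟩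
  · rintro ⟨r, hr⟩
    refine ⟨Arrow.homMk 0 (p ≫ r) (by simp [reassoc_of% hX.w]), ?_⟩
    ext
    · exact (isZero_zero C).eq_of_src _ _
    · simpa using hr

theorem isRetractionHom_iff (hX : IsSES X.hom p) (hY : IsSES Y.hom q) [Projective Y.right]
    (hq : IsRightMinimal q) (φ : X ⟶ Y) {c : Q ⟶ R} (hc : p ≫ c = φ.right ≫ q) :
    IsRetractionHom φ ↔ IsRetractionHom c := by
  have := hX.epi
  have := hY.epi
  constructor
  · rintro ⟨s, hs⟩
    have hsr : s.right ≫ φ.right = 𝟙 Y.right := congrArg CommaMorphism.right hs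
    obtain ⟨t, ht⟩ := hY.exists_cokernel_map hX.w s
    refine ⟨t, ?_⟩
    rw [← cancel_epi q, reassoc_of% ht, hc, reassoc_of% hsr, Category.comp_id]
  · rintro ⟨s, hs⟩
    have hσ : Projective.factorThru (q ≫ s) p ≫ p = q ≫ s := Projective.factorThru_comp _ _
    obtain ⟨ψ, hψ⟩ := exists_arrow_hom hY.w hX _ hσ
    have hψφ : (ψ ≫ φ).right ≫ q = q := by
      rw [Arrow.comp_right, Category.assoc, ← hc, hψ, reassoc_of% hσ, hs, Category.comp_id]
    have := hq _ hψφ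
    have : IsIso (ψ ≫ φ) :=
      hY.isIso_of_isIso_right_of_isIso_cokernel hY _ (c := 𝟙 R) (by rw [hψφ, Category.comp_id])
    exact ⟨inv (ψ ≫ φ) ≫ ψ, by rw [Category.assoc, IsIso.inv_hom_id]⟩

end IsSES

end ArrowCokernel

section SyzygySequence

variable {C : Type u} [Category.{v} C] [Abelian C] {A B P K Z : C}

/-- The morphism `(0, [1 0]ᵗ) : (0 → A) → (K → A ⊞ P)` of `H(C)`, where `K → A ⊞ P` has components
`h₁` and `i`. -/
noncomputable def arrowInl (h₁ : K ⟶ A) (i : K ⟶ P) :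
    Arrow.mk (0 : (0 : C) ⟶ A) ⟶ Arrow.mk (biprod.lift h₁ i) :=
  Arrow.homMk (u := (0 : (0 : C) ⟶ K)) (v := (biprod.inl : A ⟶ A ⊞ P))
    ((isZero_zero C).eq_of_src _ _)

/-- The morphism `(1, [0 1]) : (K → A ⊞ P) → (K → P)` of `H(C)`, where `K → A ⊞ P` has components
`h₁` and `i`. -/
noncomputable def arrowSnd (h₁ : K ⟶ A) (i : K ⟶ P) :
    Arrow.mk (biprod.lift h₁ i) ⟶ Arrow.mk i :=
  Arrow.homMk (u := 𝟙 K) (v := (biprod.snd : A ⊞ P ⟶ P)) (by simp)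

theorem arrowSES_arrowInl_arrowSnd (h₁ : K ⟶ A) (i : K ⟶ P) :
    ArrowSES (arrowInl h₁ i) (arrowSnd h₁ i) :=
  ⟨IsSES.zero_id K, IsSES.biprod_inl_snd A P⟩

theorem biprod_desc_comp_eq_snd_comp {f : A ⟶ B} {g : B ⟶ Z} (w : f ≫ g = 0) (b' : P ⟶ B) :
    biprod.desc f b' ≫ g = biprod.snd ≫ b' ≫ g := by
  ext <;> simp [w]

variable {f : A ⟶ B} {g : B ⟶ Z} {b' : P ⟶ B} {h₁ : K ⟶ A} {i : K ⟶ P}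

theorem exists_arrowInl_comp_eq [Projective P]
    (w : biprod.lift h₁ i ≫ biprod.desc f b' = 0)
    {W : Arrow C} {Q : C} {q : W.right ⟶ Q} (hW : IsSES W.hom q)
    (φ : Arrow.mk (0 : (0 : C) ⟶ A) ⟶ W) {t : B ⟶ Q} (ht : f ≫ t = φ.right ≫ q) :
    ∃ ψ : Arrow.mk (biprod.lift h₁ i) ⟶ W, arrowInl h₁ i ≫ ψ = φ := by
  have := hW.mono
  have := hW.epi
  let s : P ⟶ W.right := Projective.factorThru (b' ≫ t) q
  have hs : s ≫ q = b' ≫ t := Projective.factorThru_comp _ _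
  have hst : biprod.desc φ.right s ≫ q = biprod.desc f b' ≫ t := by
    ext
    · simpa using ht.symm
    · simpa using hs
  obtain ⟨ψ, hψ⟩ := IsSES.exists_arrow_hom (X := Arrow.mk (biprod.lift h₁ i)) w hW _ hst
  refine ⟨ψ, arrow_hom_ext_of_mono ?_⟩
  rw [Arrow.comp_right, hψ]
  exact biprod.inl_desc _ _

theorem exists_comp_arrowSnd_eq (hS : IsSES f g)
    (hB : IsSES (biprod.lift h₁ i) (biprod.desc f b')) [Mono i]
    {W : Arrow C} {Q : C} {q : W.right ⟶ Q} (hq : W.hom ≫ q = 0)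
    (φ : W ⟶ Arrow.mk i) {t : Q ⟶ B} (ht : q ≫ t ≫ g = φ.right ≫ b' ≫ g) :
    ∃ ψ : W ⟶ Arrow.mk (biprod.lift h₁ i), ψ ≫ arrowSnd h₁ i = φ := by
  obtain ⟨r, hr⟩ := hS.exists_lift (q ≫ t - φ.right ≫ b') (by simp [ht])
  have hrt : biprod.lift r φ.right ≫ biprod.desc f b' = q ≫ t := by
    rw [biprod.lift_desc, hr, sub_add_cancel]
  obtain ⟨ψ, hψ⟩ := IsSES.exists_arrow_hom (Y := Arrow.mk (biprod.lift h₁ i)) hq hB _ hrt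
  have : Mono (Arrow.mk i).hom := ‹Mono i›
  refine ⟨ψ, arrow_hom_ext_of_mono ?_⟩
  rw [Arrow.comp_right, hψ]
  exact biprod.lift_snd _ _

theorem isIso_of_arrowInl_comp_eq [Projective P] [Epi (b' ≫ g)]
    (hP : IsRightMinimal (b' ≫ g)) (hS : IsSES f g) (hf : ∀ e : B ⟶ B, f ≫ e = f → IsIso e)
    (hB : IsSES (biprod.lift h₁ i) (biprod.desc f b'))
    {φ : Arrow.mk (biprod.lift h₁ i) ⟶ Arrow.mk (biprod.lift h₁ i)}
    (hφ : arrowInl h₁ i ≫ φ = arrowInl h₁ i) : IsIso φ := by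
  have hB' : IsSES (Arrow.mk (biprod.lift h₁ i)).hom (biprod.desc f b') := hB
  let e : A ⊞ P ⟶ A ⊞ P := φ.right
  have he : biprod.inl ≫ e = biprod.inl := congrArg CommaMorphism.right hφ
  obtain ⟨eB, heB⟩ : ∃ eB, biprod.desc f b' ≫ eB = e ≫ biprod.desc f b' :=
    hB'.exists_cokernel_map hB'.w φ
  have hfB : f ≫ eB = f := by
    rw [← biprod.inl_desc_assoc f b', heB, reassoc_of% he, biprod.inl_desc]
  obtain ⟨eZ, heZ⟩ := hS.exists_desc (eB ≫ g) (by rw [reassoc_of% hfB, hS.w])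
  obtain ⟨eP, heP⟩ := (IsSES.biprod_inl_snd A P).exists_desc (e ≫ biprod.snd)
    (by rw [reassoc_of% he, biprod.inl_snd])
  have hPZ : eP ≫ b' ≫ g = (b' ≫ g) ≫ eZ := by
    have hg := biprod_desc_comp_eq_snd_comp hS.w b'
    rw [← cancel_epi (biprod.snd : A ⊞ P ⟶ P), reassoc_of% heP, ← hg, ← reassoc_of% heB, ← heZ,
      reassoc_of% hg, Category.assoc]
  have : IsIso eB := hf _ hfB
  have : IsIso eZ := hS.isIso₃ hS (a := 𝟙 A) (by rw [hfB, Category.id_comp]) heZ.symm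
  have : IsIso eP := hP.isIso_of_comp_eq_comp hPZ
  have : IsIso φ.right := (IsSES.biprod_inl_snd A P).isIso₂ (IsSES.biprod_inl_snd A P)
    (a := 𝟙 A) (e := e) (by rw [he, Category.id_comp]) heP.symm
  exact hB'.isIso_of_isIso_right_of_isIso_cokernel hB' φ heB

theorem isIso_of_comp_arrowSnd_eq (w : f ≫ g = 0) (hg : IsRightMinimal g)
    (hB : IsSES (biprod.lift h₁ i) (biprod.desc f b'))
    {φ : Arrow.mk (biprod.lift h₁ i) ⟶ Arrow.mk (biprod.lift h₁ i)}
    (hφ : φ ≫ arrowSnd h₁ i = arrowSnd h₁ i) : IsIso φ := by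
  have hB' : IsSES (Arrow.mk (biprod.lift h₁ i)).hom (biprod.desc f b') := hB
  let e : A ⊞ P ⟶ A ⊞ P := φ.right
  have he : e ≫ biprod.snd = biprod.snd := congrArg CommaMorphism.right hφ
  have hleft : φ.left = 𝟙 K :=
    (Category.comp_id φ.left).symm.trans (congrArg CommaMorphism.left hφ)
  obtain ⟨eB, heB⟩ : ∃ eB, biprod.desc f b' ≫ eB = e ≫ biprod.desc f b' :=
    hB'.exists_cokernel_map hB'.w φ
  have hgB : eB ≫ g = g := by
    have := hB.epi
    rw [← cancel_epi (biprod.desc f b'), reassoc_of% heB, biprod_desc_comp_eq_snd_comp w,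
      reassoc_of% he]
  have : IsIso eB := hg _ hgB
  have : IsIso φ.left := hleft ▸ inferInstanceAs (IsIso (𝟙 K))
  exact hB'.isIso_of_isIso_left_of_isIso_cokernel hB' φ heB

theorem minLAS_arrowInl [Projective P] [Epi (b' ≫ g)] (hP : IsRightMinimal (b' ≫ g))
    (hS : IsSES f g) (hf : MinLAS (fun _ => True) f)
    (hB : IsSES (biprod.lift h₁ i) (biprod.desc f b')) :
    MinLAS (fun X : Arrow C => Mono X.hom) (arrowInl h₁ i) := by
  obtain ⟨hsec, hfac, hmin⟩ := hf
  refine ⟨fun h => hsec ?_, fun W hW φ hφ => ?_, fun _ => isIso_of_arrowInl_comp_eq hP hS hmin hB⟩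
  · have hinl : (arrowInl h₁ i).right ≫ biprod.desc f b' = f := biprod.inl_desc f b'
    rw [← hinl]
    exact (IsSES.isSection_iff (X := Arrow.mk _) hB (arrowInl h₁ i)).1 h
  · have hW' : IsSES W.hom (cokernel.π W.hom) := IsSES.cokernel_π W.hom
    obtain ⟨t, ht⟩ := hfac _ trivial _ (mt (hW'.isSection_iff φ).2 hφ)
    exact exists_arrowInl_comp_eq hB.w hW' φ ht

theorem minRAS_arrowSnd [Projective P] (hP : IsRightMinimal (b' ≫ g))
    (hS : IsSES f g) (hg : MinRAS (fun _ => True) g) (hZ : IsSES i (b' ≫ g))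
    (hB : IsSES (biprod.lift h₁ i) (biprod.desc f b')) :
    MinRAS (fun X : Arrow C => Mono X.hom) (arrowSnd h₁ i) := by
  obtain ⟨hret, hfac, hmin⟩ := hg
  have hretr {W : Arrow C} {Q : C} {q : W.right ⟶ Q} (hW : IsSES W.hom q) (φ : W ⟶ Arrow.mk i)
      {c : Q ⟶ Z} (hc : q ≫ c = φ.right ≫ b' ≫ g) : IsRetractionHom φ ↔ IsRetractionHom c :=
    have : Projective (Arrow.mk i).right := ‹Projective P›
    IsSES.isRetractionHom_iff (Y := Arrow.mk i) hW hZ hP φ hc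
  refine ⟨fun h => hret ?_, fun W hW φ hφ => ?_,
    fun _ => isIso_of_comp_arrowSnd_eq hS.w hmin hB⟩
  · exact (hretr (W := Arrow.mk _) hB (arrowSnd h₁ i) (biprod_desc_comp_eq_snd_comp hS.w b')).1 h
  · have hW' : IsSES W.hom (cokernel.π W.hom) := IsSES.cokernel_π W.hom
    obtain ⟨c, hc⟩ := IsSES.exists_cokernel_map (Y := Arrow.mk i) hW' hZ.w φ
    obtain ⟨t, rfl⟩ := hfac _ trivial c (mt (hretr hW' φ hc).2 hφ)
    have := hZ.mono
    exact exists_comp_arrowSnd_eq hS hB hW'.w φ hc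

end SyzygySequence

theorem stmt6_general {C : Type u} [Category.{v} C] [Abelian C] {A B P K Z : C}
    {f : A ⟶ B} {g : B ⟶ Z} (hass : IsASSGen (fun _ => True) f g)
    {b : P ⟶ Z} [Projective P] [Epi b] (hmin : IsRightMinimal b) {i : K ⟶ P}
    (wi : i ≫ b = 0) (hker : IsLimit (KernelFork.ofι i wi))
    {b' : P ⟶ B} (hb' : b' ≫ g = b) {h₁ : K ⟶ A}
    (wh : biprod.lift h₁ i ≫ biprod.desc f b' = 0)
    (hker' : IsLimit (KernelFork.ofι (biprod.lift h₁ i) wh)) :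
    IsASSArrow (fun X : Arrow C => Mono X.hom) (arrowInl h₁ i) (arrowSnd h₁ i) := by
  subst hb'
  obtain ⟨-, -, -, hS, hf, hg⟩ := hass
  have := hS.epi_biprod_desc b'
  have hZ : IsSES i (b' ≫ g) := IsSES.of_isLimit_kernelFork wi hker
  have hB : IsSES (biprod.lift h₁ i) (biprod.desc f b') := IsSES.of_isLimit_kernelFork wh hker'
  exact ⟨(isZero_zero C).mono _, hB.mono, hZ.mono, arrowSES_arrowInl_arrowSnd h₁ i,
    minLAS_arrowInl hmin hS hf hB, minRAS_arrowSnd hmin hS hg hZ hB⟩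

/-- Let `0 → A →f→ B →g→ C → 0` be an almost split sequence in `C`,
`b : P → C` a projective cover with kernel `i : Ω(C) → P`, `b' : P → B` a lifting of `b`
through `g`, and `h = (h₁, i) : Ω(C) → A ⊞ P` the kernel of `[f b'] : A ⊞ P → B`.
Then `0 → (0 → A) → (Ω(C) →h→ A⊞P) → (Ω(C) →i→ P) → 0`, with morphisms `(0, [1 0]ᵗ)`
and `(1, [0 1])`, is an almost split sequence in `S(C)`:  it is the almost split
sequence in `S(C)` starting at `(0 → A)`. -/
theorem stmt6 (k : Type) [Field k]
    (C : Type u) [Category.{v} C] [Abelian C] [CategoryTheory.Linear k C]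
    (hfin : ∀ X Y : C, FiniteDimensional k (X ⟶ Y)) (hKS : IsKrullSchmidt C)
    [EnoughProjectives C] [EnoughInjectives C]
    {A B Cc : C} (f : A ⟶ B) (g : B ⟶ Cc)
    (hass : IsASSGen (fun _ => True) f g)
    {P : C} (b : P ⟶ Cc) (hP : Projective P) (hb : Epi b)
    (hbmin : ∀ e : P ⟶ P, e ≫ b = b → IsIso e)
    {Om : C} (i : Om ⟶ P) (wi : i ≫ b = 0)
    (hker : Nonempty (IsLimit (KernelFork.ofι i wi)))
    (b' : P ⟶ B) (hb' : b' ≫ g = b)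
    (h₁ : Om ⟶ A) (wh : biprod.lift h₁ i ≫ biprod.desc f b' = 0)
    (hker' : Nonempty (IsLimit (KernelFork.ofι (biprod.lift h₁ i) wh))) :
    IsASSArrow (fun X : Arrow C => Mono X.hom)
      (Arrow.homMk (u := (0 : (0 : C) ⟶ Om)) (v := (biprod.inl : A ⟶ A ⊞ P))
        ((Limits.isZero_zero C).eq_of_src _ _) :
          Arrow.mk (0 : (0 : C) ⟶ A) ⟶ Arrow.mk (biprod.lift h₁ i))
      (Arrow.homMk (u := 𝟙 Om) (v := (biprod.snd : A ⊞ P ⟶ P))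
        (by simp) :
          Arrow.mk (biprod.lift h₁ i) ⟶ Arrow.mk i) := by
  exact stmt6_general hass hbmin wi hker.some hb' wh hker'.some
end

section
/- Let 0 → A →f→ B →g→ C → 0 be an almost split sequence in C. Then the sequence 0 → (A → 0) → (B →g→ C) → (C →id→ C) → 0 in H(C), with morphisms (f, 0) and (g, 1), is an almost split sequence in H(C); i.e. it is the almost split sequence in H(C) ending at (C →id→ C). -/
open CategoryTheory CategoryTheory.Limits Opposite ZeroObject

universe v u

/-! Write `u = (f, 0)` and `v = (g, 1)`. The square `u` is a pushout because `g` is a cokernel of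
`f`, so a morphism out of `A → 0` extends along `u` as soon as its domain component extends along
`f`; and a morphism into `C = C` lifts along `v` as soon as its domain component lifts along `g`,
because `1` is invertible. Since sections out of `A → 0` and retractions onto `C = C` are detected
on domain components, the almost split property of `f` and `g` is inherited by `u` and `v`. -/

section ArrowCategory

variable {C : Type u} [Category.{v} C] {W X Y Y' Z : Arrow C}

theorem isSection_iff_left (hX : IsTerminal X.right) (u : X ⟶ Y) :
    IsSection u ↔ IsSection u.left := by
  constructor
  · rintro ⟨r, hr⟩
    exact ⟨r.left, Arrow.hom.congr_left hr⟩
  · rintro ⟨r, hr⟩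
    exact ⟨Arrow.homMk r (hX.from Y.right) (hX.hom_ext _ _),
      Arrow.hom_ext _ _ hr (hX.hom_ext _ _)⟩

theorem isRetractionHom_iff_left [IsIso Z.hom] (v : Y ⟶ Z) :
    IsRetractionHom v ↔ IsRetractionHom v.left := by
  constructor
  · rintro ⟨s, hs⟩
    exact ⟨s.left, Arrow.hom.congr_left hs⟩
  · rintro ⟨s, hs⟩
    have hright : (inv Z.hom ≫ s ≫ Y.hom) ≫ v.right = 𝟙 Z.right := by
      rw [Category.assoc, Category.assoc, ← Arrow.w v, reassoc_of% hs, IsIso.inv_hom_id]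
    exact ⟨Arrow.homMk s (inv Z.hom ≫ s ≫ Y.hom) (IsIso.hom_inv_id_assoc _ _).symm,
      Arrow.hom_ext _ _ hs hright⟩

theorem arrow_hom_ext_of_isPushout {u : X ⟶ Y} (hu : IsPushout u.left X.hom Y.hom u.right)
    {b b' : Y ⟶ W} (hleft : b.left = b'.left) (hcomp : u ≫ b = u ≫ b') : b = b' := by
  refine Arrow.hom_ext _ _ hleft (hu.hom_ext ?_ (Arrow.hom.congr_right hcomp))
  rw [← Arrow.w b, ← Arrow.w b', hleft]

theorem exists_extension_of_isPushout {u : X ⟶ Y}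
    (hu : IsPushout u.left X.hom Y.hom u.right) (a : X ⟶ W) (t : Y.left ⟶ W.left)
    (ht : u.left ≫ t = a.left) : ∃ b : Y ⟶ W, b.left = t ∧ u ≫ b = a := by
  have hcompat : u.left ≫ t ≫ W.hom = X.hom ≫ a.right := by
    rw [reassoc_of% ht, Arrow.w a]
  exact ⟨Arrow.homMk t (hu.desc (t ≫ W.hom) a.right hcompat) (hu.inl_desc _ _ _).symm, rfl,
    Arrow.hom_ext _ _ ht (hu.inr_desc _ _ _)⟩

theorem exists_lift_of_isIso_right (v : Y ⟶ Z) [IsIso v.right] (a : W ⟶ Z)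
    (t : W.left ⟶ Y.left) (ht : t ≫ v.left = a.left) :
    ∃ b : W ⟶ Y, b.left = t ∧ b ≫ v = a := by
  have hw : t ≫ Y.hom = W.hom ≫ a.right ≫ inv v.right := by
    rw [← Category.assoc, IsIso.eq_comp_inv, Category.assoc, ← Arrow.w v, reassoc_of% ht,
      Arrow.w a]
  exact ⟨Arrow.homMk t (a.right ≫ inv v.right) hw, rfl,
    Arrow.hom_ext _ _ ht (by simp)⟩

theorem isIso_of_isPushout_of_isIso_left {u : X ⟶ Y} {h : Y ⟶ Y'} {u' : X ⟶ Y'}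
    (hu : IsPushout u.left X.hom Y.hom u.right) (hu' : IsPushout u'.left X.hom Y'.hom u'.right)
    (hcomp : u ≫ h = u') [IsIso h.left] : IsIso h := by
  have hinv : u'.left ≫ inv h.left = u.left :=
    (IsIso.comp_inv_eq _).2 (Arrow.hom.congr_left hcomp).symm
  obtain ⟨h', hleft, hcomp'⟩ := exists_extension_of_isPushout hu' u (inv h.left) hinv
  refine ⟨h', arrow_hom_ext_of_isPushout hu ?_ ?_, arrow_hom_ext_of_isPushout hu' ?_ ?_⟩
  · rw [Arrow.comp_left, hleft, IsIso.hom_inv_id, Arrow.id_left]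
  · rw [reassoc_of% hcomp, hcomp', Category.comp_id]
  · rw [Arrow.comp_left, hleft, IsIso.inv_hom_id, Arrow.id_left]
  · rw [reassoc_of% hcomp', hcomp, Category.comp_id]

variable {P : C → Prop} {Q : Arrow C → Prop}

theorem minLAS_of_minLAS_left (hQ : ∀ W, Q W → P W.left) {u : X ⟶ Y} (hX : IsTerminal X.right)
    (hu : IsPushout u.left X.hom Y.hom u.right) (hleft : MinLAS P u.left) : MinLAS Q u := by
  obtain ⟨hsec, hext, hmin⟩ := hleft
  refine ⟨mt (isSection_iff_left hX u).1 hsec, fun W hW a ha => ?_, fun h hh => ?_⟩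
  · obtain ⟨t, ht⟩ := hext W.left (hQ W hW) a.left (mt (isSection_iff_left hX a).2 ha)
    obtain ⟨b, -, hb⟩ := exists_extension_of_isPushout hu a t ht
    exact ⟨b, hb⟩
  · have : IsIso h.left := hmin h.left (Arrow.hom.congr_left hh)
    exact isIso_of_isPushout_of_isIso_left hu hu hh

theorem minRAS_of_minRAS_left (hQ : ∀ W, Q W → P W.left) {v : Y ⟶ Z} (hZ : IsIso Z.hom)
    (hv : IsIso v.right) (hleft : MinRAS P v.left) : MinRAS Q v := by
  obtain ⟨hret, hlift, hmin⟩ := hleft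
  refine ⟨mt (isRetractionHom_iff_left v).1 hret, fun W hW a ha => ?_, fun h hh => ?_⟩
  · obtain ⟨t, ht⟩ := hlift W.left (hQ W hW) a.left (mt (isRetractionHom_iff_left a).2 ha)
    obtain ⟨b, -, hb⟩ := exists_lift_of_isIso_right v a t ht
    exact ⟨b, hb⟩
  · have : IsIso h.left := hmin h.left (Arrow.hom.congr_left hh)
    have : h.right = 𝟙 Y.right := by
      rw [← cancel_mono v.right, Category.id_comp]
      exact Arrow.hom.congr_right hh
    have : IsIso h.right := this ▸ inferInstance
    exact Arrow.isIso_of_isIso_left_of_isIso_right h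

end ArrowCategory

theorem isPushout_of_isColimit_cokernelCofork {C : Type u} [Category.{v} C] [HasZeroMorphisms C]
    {X Y Z O : C} {f : X ⟶ Y} {g : Y ⟶ Z} {w : f ≫ g = 0}
    (hg : IsColimit (CokernelCofork.ofπ g w)) (hO : IsZero O) :
    IsPushout f (0 : X ⟶ O) g (0 : O ⟶ Z) := by
  refine ⟨⟨by rw [w, zero_comp]⟩, ⟨PushoutCocone.IsColimit.mk _
    (fun s => hg.desc (CokernelCofork.ofπ s.inl ?_)) (fun s => ?_)
    (fun s => hO.eq_of_src _ _) (fun s m hm _ => ?_)⟩⟩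
  · rw [s.condition, zero_comp]
  · exact Cofork.IsColimit.π_desc hg
  · exact Cofork.IsColimit.hom_ext hg (by rw [Cofork.IsColimit.π_desc hg]; exact hm)

section Abelian

variable {C : Type u} [Category.{v} C] [Abelian C]

theorem IsSES.isPushout {X Y Z O : C} {f : X ⟶ Y} {g : Y ⟶ Z} (h : IsSES f g) (hO : IsZero O) :
    IsPushout f (0 : X ⟶ O) g (0 : O ⟶ Z) := by
  have : Epi (ShortComplex.mk f g h.w).g := h.epi
  exact isPushout_of_isColimit_cokernelCofork h.ex.gIsCokernel hO

theorem isSES_zero_of_isIso {O Y Z : C} (hO : IsZero O) (g : Y ⟶ Z) [IsIso g] :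
    IsSES (0 : O ⟶ Y) g where
  mono := ⟨fun _ _ _ => hO.eq_of_tgt _ _⟩
  epi := inferInstance
  w := zero_comp
  ex := (ShortComplex.exact_iff_mono _ rfl).2 (inferInstanceAs (Mono g))

theorem stmt8_general {P : C → Prop} {Q : Arrow C → Prop} (hQ : ∀ W, Q W → P W.left)
    {A B Cc : C} (f : A ⟶ B) (g : B ⟶ Cc) (hass : IsASSGen P f g)
    (hA : Q (Arrow.mk (0 : A ⟶ (0 : C)))) (hB : Q (Arrow.mk g)) (hC : Q (Arrow.mk (𝟙 Cc))) :
    IsASSArrow Q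
      (Arrow.homMk (u := f) (v := (0 : (0 : C) ⟶ Cc)) (by simp [hass.2.2.2.1.w]) :
        Arrow.mk (0 : A ⟶ (0 : C)) ⟶ Arrow.mk g)
      (Arrow.homMk (u := g) (v := 𝟙 Cc) (by simp) :
        Arrow.mk g ⟶ Arrow.mk (𝟙 Cc)) := by
  obtain ⟨-, -, -, hses, hf, hg⟩ := hass
  exact ⟨hA, hB, hC, ⟨hses, isSES_zero_of_isIso (isZero_zero C) (𝟙 Cc)⟩,
    minLAS_of_minLAS_left hQ (isZero_zero C).isTerminal (hses.isPushout (isZero_zero C)) hf,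
    minRAS_of_minRAS_left hQ (IsIso.id Cc) (IsIso.id Cc) hg⟩

end Abelian

/-- Let `0 → A →f→ B →g→ C → 0` be an almost split sequence in `C`.
Then `0 → (A → 0) → (B →g→ C) → (C →id→ C) → 0`, with morphisms `(f, 0)` and `(g, 1)`,
is an almost split sequence in `H(C)`:  it is the almost split sequence in `H(C)` ending
at `(C →id→ C)`. -/
theorem stmt8 (k : Type) [Field k]
    (C : Type u) [Category.{v} C] [Abelian C] [CategoryTheory.Linear k C]
    (hfin : ∀ X Y : C, FiniteDimensional k (X ⟶ Y)) (hKS : IsKrullSchmidt C)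
    [EnoughProjectives C] [EnoughInjectives C]
    {A B Cc : C} (f : A ⟶ B) (g : B ⟶ Cc)
    (hass : IsASSGen (fun _ => True) f g) :
    IsASSArrow (fun _ : Arrow C => True)
      (Arrow.homMk (u := f) (v := (0 : (0 : C) ⟶ Cc)) (by simp [hass.2.2.2.1.w]) :
        Arrow.mk (0 : A ⟶ (0 : C)) ⟶ Arrow.mk g)
      (Arrow.homMk (u := g) (v := 𝟙 Cc) (by simp) :
        Arrow.mk g ⟶ Arrow.mk (𝟙 Cc)) := by
  exact stmt8_general (fun _ => id) f g hass trivial trivial trivial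
end

section
/- Let k be an algebraically closed field of characteristic different from 2, n ≥ 1, and let T_n(k) be the algebra of lower triangular n×n matrices over k (equivalently, the path algebra of the linearly oriented quiver of type A_n : 1 → 2 → ⋯ → n). Then the monomorphism category S(mod T_n(k)) is of finite representation type if and only if n ≤ 5. -/
open CategoryTheory CategoryTheory.Limits

/-- The algebra of lower triangular `n × n` matrices over `k`. -/
def lowerTriangularAlg (k : Type) [CommRing k] (n : ℕ) :
    Subalgebra k (Matrix (Fin n) (Fin n) k) where
  carrier := {M | ∀ i j : Fin n, i < j → M i j = 0}
  add_mem' := fun hA hB i j hij => by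
    simp [Matrix.add_apply, hA i j hij, hB i j hij]
  zero_mem' := fun i j _ => rfl
  mul_mem' := fun {A B} hA hB i j hij => by
    simp only [Matrix.mul_apply]
    apply Finset.sum_eq_zero
    intro l _
    rcases lt_or_ge i l with h | h
    · rw [hA i l h, zero_mul]
    · rw [hB l j (lt_of_le_of_lt h hij), mul_zero]
  one_mem' := fun i j hij => Matrix.one_apply_ne (ne_of_lt hij)
  algebraMap_mem' := fun r i j hij => by
    simp [Matrix.algebraMap_matrix_apply, ne_of_lt hij]

/-- The componentwise direct sum of two objects of the morphism category. -/
noncomputable def arrowBiprod {C : Type*} [Category C] [Preadditive C]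
    [HasBinaryBiproducts C] (f g : Arrow C) : Arrow C :=
  Arrow.mk (biprod.map f.hom g.hom)

/-- Indecomposability of an object of the subcategory of the morphism category given by
the predicate `P`. -/
noncomputable def IndecArrowIn {C : Type*} [Category C] [Preadditive C]
    [HasBinaryBiproducts C] (P : Arrow C → Prop) (X : Arrow C) : Prop :=
  ¬ IsZero X ∧ ∀ Y Z : Arrow C, P Y → P Z →
    Nonempty (X ≅ arrowBiprod Y Z) → IsZero Y ∨ IsZero Z

/-- The subcategory given by `P` has finite representation type. -/
noncomputable def FRTArrow {C : Type*} [Category C] [Preadditive C]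
    [HasBinaryBiproducts C] (P : Arrow C → Prop) : Prop :=
  ∃ s : Set (Arrow C), s.Finite ∧
    ∀ X, P X → IndecArrowIn P X → ∃ Y ∈ s, Nonempty (X ≅ Y)

/-- Objects of the monomorphism category `S(mod Λ)` of finite dimensional right
`Λ`-modules (= left modules over `Λᵐᵒᵖ`): injective homomorphisms between finitely
generated modules. -/
def SModObj (Λ : Type) [Ring Λ] (X : Arrow (ModuleCat Λᵐᵒᵖ)) : Prop :=
  Module.Finite Λᵐᵒᵖ X.left ∧ Module.Finite Λᵐᵒᵖ X.right ∧ Mono X.hom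

/-!
A monomorphism of right `T_n`-modules has the form `Q / K → P / K`, where `K j ≤ Q j ≤ P j` are
subspaces of one vector space, decreasing in `j`; so it comes from a representation of the poset
`Fin 3 × (Fin n)ᵒᵈ`.

Suppose that the elements of a poset which are not below `a` form two chains. A representation `X`
induces on `X(a)` a representation of the derived poset, and integrating the latter gives
`N ⟶ X` which has a section over `X(a)`. As two chains of subspaces have a common adapted
basis, this section extends to `σ : X ⟶ N` up to maps which factor through one-dimensional
representations. So the poset is representation-finite if its derived poset is, and for `n ≤ 5` a
sequence of derivations exhausts the grid. Krull–Schmidt then gives finite representation type.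

For `6 ≤ n` an endomorphism `T` of `W` gives a flag `K j ≤ Q j ≤ P j` of subspaces of `W × W × W`.
The `K j` and `P j` force its endomorphisms to be diagonal, `Q 3` forces the diagonal entries to be
equal and `Q 2` forces them to commute with `T`. As `K 3 = 0` and `P 3` is the whole space, passing
to arrows loses nothing, and the nilpotent Jordan blocks give infinitely many indecomposables.
-/

universe u w

section AdditiveHull

variable {C D : Type*} [Category C] [Preadditive C] [Category D] [Preadditive D]

/-- The ideal of a preadditive category generated by the identities of the objects in `S`: the
finite sums of morphisms factoring through some member of `S`. -/
def factorIdeal (S : Set C) (X Y : C) : AddSubgroup (X ⟶ Y) :=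
  AddSubgroup.closure {h | ∃ M ∈ S, ∃ (f : X ⟶ M) (g : M ⟶ Y), f ≫ g = h}

/-- The additive hull `add S`. It is phrased through the identity of `X`, so that it makes sense
without biproducts; when these exist, it says that `X` is a direct summand of a finite direct sum
of members of `S`. -/
def addHull (S : Set C) : ObjectProperty C := fun X => 𝟙 X ∈ factorIdeal S X X

/-- The objects satisfying `P` all lie in the additive hull of finitely many of them. -/
def HasFiniteAddGenerators (P : ObjectProperty C) : Prop :=
  ∃ S : Set C, S.Finite ∧ (∀ M ∈ S, P M) ∧ P ≤ addHull S

theorem comp_mem_factorIdeal {S : Set C} {X Y M : C} (hM : M ∈ S) (f : X ⟶ M) (g : M ⟶ Y) :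
    f ≫ g ∈ factorIdeal S X Y :=
  AddSubgroup.subset_closure ⟨M, hM, f, g, rfl⟩

theorem factorIdeal_comp_comp {S : Set C} {W X Y Z : C} {h : X ⟶ Y} (hh : h ∈ factorIdeal S X Y)
    (f : W ⟶ X) (g : Y ⟶ Z) : f ≫ h ≫ g ∈ factorIdeal S W Z := by
  induction hh using AddSubgroup.closure_induction with
  | mem h hh =>
    obtain ⟨M, hM, p, q, rfl⟩ := hh
    simpa only [Category.assoc] using comp_mem_factorIdeal hM (f ≫ p) (q ≫ g)
  | zero => simp only [zero_comp, comp_zero, zero_mem]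
  | add h h' _ _ ih ih' =>
    simpa only [Preadditive.add_comp, Preadditive.comp_add] using add_mem ih ih'
  | neg h _ ih => simpa only [Preadditive.neg_comp, Preadditive.comp_neg] using neg_mem ih

theorem factorIdeal_le_of_addHull {S T : Set C} (h : ∀ M ∈ S, addHull T M) (X Y : C) :
    factorIdeal S X Y ≤ factorIdeal T X Y := by
  refine (AddSubgroup.closure_le _).2 ?_
  rintro _ ⟨M, hM, f, g, rfl⟩
  simpa only [SetLike.mem_coe, Category.id_comp] using factorIdeal_comp_comp (h M hM) f g

theorem addHull_of_mem {S : Set C} {M : C} (hM : M ∈ S) : addHull S M := by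
  simpa only [addHull, Category.comp_id] using comp_mem_factorIdeal hM (𝟙 M) (𝟙 M)

theorem addHull_mono {S T : Set C} (h : S ⊆ T) : addHull S ≤ addHull T := fun X hX =>
  factorIdeal_le_of_addHull (fun _ hM => addHull_of_mem (h hM)) X X hX

theorem addHull_map (G : C ⥤ D) [G.Additive] {S : Set C} {X : C} (h : addHull S X) :
    addHull (G.obj '' S) (G.obj X) := by
  have key : factorIdeal S X X ≤
      (factorIdeal (G.obj '' S) (G.obj X) (G.obj X)).comap G.mapAddHom := by
    refine (AddSubgroup.closure_le _).2 ?_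
    rintro _ ⟨M, hM, f, g, rfl⟩
    simpa only [AddSubgroup.coe_comap, Set.mem_preimage, SetLike.mem_coe, Functor.coe_mapAddHom,
      G.map_comp] using comp_mem_factorIdeal (Set.mem_image_of_mem _ hM) (G.map f) (G.map g)
  simpa only [addHull, AddSubgroup.mem_comap, Functor.coe_mapAddHom, G.map_id] using key h

theorem HasFiniteAddGenerators.of_functor {P : ObjectProperty C} {Q : ObjectProperty D}
    (hP : HasFiniteAddGenerators P) (G : C ⥤ D) [G.Additive] (hG : ∀ X, P X → Q (G.obj X))
    {T : Set D} (hT : T.Finite) (hTQ : ∀ Y ∈ T, Q Y)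
    (h : ∀ Y, Q Y → ∃ X, P X ∧ ∃ (i : Y ⟶ G.obj X) (p : G.obj X ⟶ Y),
      𝟙 Y - i ≫ p ∈ factorIdeal T Y Y) : HasFiniteAddGenerators Q := by
  obtain ⟨S, hS, hSP, hPS⟩ := hP
  refine ⟨G.obj '' S ∪ T, (hS.image _).union hT, ?_, fun Y hY => ?_⟩
  · rintro _ (⟨M, hM, rfl⟩ | hM)
    exacts [hG M (hSP M hM), hTQ _ hM]
  · obtain ⟨X, hX, i, p, hip⟩ := h Y hY
    have hGX : addHull (G.obj '' S ∪ T) (G.obj X) :=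
      addHull_mono Set.subset_union_left _ (addHull_map G (hPS X hX))
    have hcomp : i ≫ p ∈ factorIdeal (G.obj '' S ∪ T) Y Y := by
      simpa only [Category.id_comp] using factorIdeal_comp_comp hGX i p
    have hsub := factorIdeal_le_of_addHull (T := G.obj '' S ∪ T)
      (fun M hM => addHull_of_mem (Or.inr hM)) Y Y hip
    simpa only [addHull, add_sub_cancel] using add_mem hcomp hsub

theorem HasFiniteAddGenerators.of_retracts {P : ObjectProperty C} {Q : ObjectProperty D}
    (hP : HasFiniteAddGenerators P) (G : C ⥤ D) [G.Additive] (hG : ∀ X, P X → Q (G.obj X))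
    (h : ∀ Y, Q Y → ∃ X, P X ∧ Nonempty (Retract Y (G.obj X))) : HasFiniteAddGenerators Q :=
  hP.of_functor G hG Set.finite_empty (fun _ h => h.elim) fun Y hY => by
    obtain ⟨X, hX, ⟨r⟩⟩ := h Y hY
    exact ⟨X, hX, r.i, r.r, by simp only [r.retract, sub_self, zero_mem]⟩

end AdditiveHull

/-- A representation of the poset `α` over the field `k`: a finite dimensional vector space with an
order preserving family of subspaces indexed by `α`. -/
structure PosetRep (k : Type) [Field k] (α : Type w) [Preorder α] where
  /-- The ambient space. -/
  V : Type u
  [addCommGroup : AddCommGroup V]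
  [module : Module k V]
  [finite : Module.Finite k V]
  /-- The family of subspaces. -/
  F : α →o Submodule k V

namespace PosetRep

variable {k : Type} [Field k] {α : Type w} [Preorder α] {β : Type*} [Preorder β]

attribute [instance] PosetRep.addCommGroup PosetRep.module PosetRep.finite

/-- The linear maps that are morphisms of poset representations. -/
def homs (X Y : PosetRep.{u} k α) : Submodule k (X.V →ₗ[k] Y.V) :=
  ⨅ a, (X.F a).compatibleMaps (Y.F a)

theorem mem_homs {X Y : PosetRep.{u} k α} {f : X.V →ₗ[k] Y.V} :
    f ∈ homs X Y ↔ ∀ a, ∀ x ∈ X.F a, f x ∈ Y.F a := by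
  simp only [homs, Submodule.mem_iInf]
  rfl

instance : Category (PosetRep.{u} k α) where
  Hom X Y := homs X Y
  id X := ⟨LinearMap.id, mem_homs.2 fun _ _ hx => hx⟩
  comp f g := ⟨g.1 ∘ₗ f.1, mem_homs.2 fun a _ hx => mem_homs.1 g.2 a _ (mem_homs.1 f.2 a _ hx)⟩

instance : Preadditive (PosetRep.{u} k α) where
  homGroup X Y := inferInstanceAs (AddCommGroup (homs X Y))
  add_comp _ _ _ _ _ h := Subtype.ext (LinearMap.comp_add _ _ h.1)
  comp_add _ _ _ f _ _ := Subtype.ext (LinearMap.add_comp f.1 _ _)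

/-- The linear map underlying a morphism of poset representations, as an additive map. -/
def toLin {X Y : PosetRep.{u} k α} : (X ⟶ Y) →+ (X.V →ₗ[k] Y.V) :=
  (homs X Y).toAddSubgroup.subtype

/-- The morphism of poset representations given by a linear map. -/
def homMk {X Y : PosetRep.{u} k α} (f : X.V →ₗ[k] Y.V) (hf : ∀ a, ∀ x ∈ X.F a, f x ∈ Y.F a) :
    X ⟶ Y :=
  ⟨f, mem_homs.2 hf⟩

theorem toLin_mem {X Y : PosetRep.{u} k α} (f : X ⟶ Y) (a : α) {x : X.V} (hx : x ∈ X.F a) :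
    toLin f x ∈ Y.F a :=
  mem_homs.1 f.2 a x hx

@[ext]
theorem hom_ext {X Y : PosetRep.{u} k α} {f g : X ⟶ Y} (h : ∀ x, toLin f x = toLin g x) : f = g :=
  Subtype.ext (LinearMap.ext h)

theorem toLin_id_apply (X : PosetRep.{u} k α) (x : X.V) : toLin (𝟙 X) x = x := rfl

theorem toLin_comp_apply {X Y Z : PosetRep.{u} k α} (f : X ⟶ Y) (g : Y ⟶ Z) (x : X.V) :
    toLin (f ≫ g) x = toLin g (toLin f x) := rfl

/-- The poset `α` is representation-finite over `k`: all its representations are direct summands of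
direct sums of copies of finitely many of them. -/
def IsFinite.{u', w'} (k : Type) [Field k] (α : Type w') [Preorder α] : Prop :=
  HasFiniteAddGenerators (⊤ : ObjectProperty (PosetRep.{u'} k α))

/-- Restriction of poset representations along an order preserving map. -/
def restrict (e : α →o β) : PosetRep.{u} k β ⥤ PosetRep.{u} k α where
  obj X := ⟨X.V, X.F.comp e⟩
  map {X Y} f := homMk (toLin (X := X) (Y := Y) f) fun a _ => toLin_mem (X := X) (Y := Y) f (e a)

instance (e : α →o β) : (restrict (k := k) e).Additive where
  map_add {_ _ _ _} := rfl

theorem IsFinite.of_le_iff_le (h : IsFinite.{u} k β) (e : α → β) (he : ∀ a b, e a ≤ e b ↔ a ≤ b) :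
    IsFinite.{u} k α := by
  refine h.of_retracts (restrict ⟨e, fun a b => (he a b).2⟩) (fun _ _ => trivial) fun X _ => ?_
  let Y : PosetRep k β :=
    ⟨X.V, ⟨fun b => ⨆ a, ⨆ _ : e a ≤ b, X.F a, fun b b' hb => iSup_mono fun a =>
      iSup_mono' fun h => ⟨h.trans hb, le_rfl⟩⟩⟩
  have hY (a : α) : Y.F (e a) = X.F a :=
    le_antisymm (iSup₂_le fun b h => X.F.mono ((he b a).1 h))
      (le_iSup₂_of_le a le_rfl le_rfl)
  exact ⟨Y, trivial,
    ⟨{ i := homMk LinearMap.id fun a _ hx => (hY a).ge hx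
       r := homMk LinearMap.id fun a _ hx => (hY a).le hx
       retract := rfl }⟩⟩

/-- The one-dimensional representation whose nonzero subspaces are indexed by `E`. -/
def oneDim (k : Type) [Field k] (E : UpperSet α) : PosetRep.{u} k α where
  V := ULift k
  F := ⟨fun a => ⨆ _ : a ∈ E, ⊤, fun _ _ h => iSup_mono' fun ha => ⟨E.upper h ha, le_rfl⟩⟩

/-- The coordinate on the one-dimensional representation. -/
def oneDimEquiv (E : UpperSet α) : (oneDim.{u} k E).V ≃ₗ[k] k := ULift.moduleEquiv

theorem oneDim_F_of_mem {E : UpperSet α} {a : α} (ha : a ∈ E) : (oneDim.{u} k E).F a = ⊤ :=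
  iSup_pos ha

theorem oneDim_F_of_notMem {E : UpperSet α} {a : α} (ha : a ∉ E) : (oneDim.{u} k E).F a = ⊥ :=
  iSup_neg ha

/-- The endomorphism `v ↦ φ v • r` of `X`, which factors through `oneDim k E`. -/
def rankOne {X : PosetRep.{u} k α} (E : UpperSet α) (φ : Module.Dual k X.V) (r : X.V)
    (hφ : ∀ a ∉ E, ∀ x ∈ X.F a, φ x = 0) (hr : ∀ a ∈ E, r ∈ X.F a) : X ⟶ X :=
  homMk (φ.smulRight r) fun a x hx => by
    by_cases ha : a ∈ E
    · exact Submodule.smul_mem _ _ (hr a ha)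
    · simp only [LinearMap.smulRight_apply, hφ a ha x hx, zero_smul, zero_mem]

theorem rankOne_mem_factorIdeal {X : PosetRep.{u} k α} {E : UpperSet α} {φ : Module.Dual k X.V}
    {r : X.V} (hφ : ∀ a ∉ E, ∀ x ∈ X.F a, φ x = 0) (hr : ∀ a ∈ E, r ∈ X.F a)
    {S : Set (PosetRep.{u} k α)} (hS : oneDim k E ∈ S) :
    rankOne E φ r hφ hr ∈ factorIdeal S X X := by
  let f : X ⟶ oneDim k E := homMk ((oneDimEquiv E).symm.toLinearMap ∘ₗ φ) fun a x hx => by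
    by_cases ha : a ∈ E
    · exact (oneDim_F_of_mem ha).ge Submodule.mem_top
    · simp only [LinearMap.comp_apply, hφ a ha x hx, map_zero, zero_mem]
  let g : oneDim k E ⟶ X :=
    homMk (LinearMap.toSpanSingleton k X.V r ∘ₗ (oneDimEquiv E).toLinearMap) fun a x hx => by
      by_cases ha : a ∈ E
      · exact Submodule.smul_mem _ _ (hr a ha)
      · have hx0 : x = 0 := (Submodule.mem_bot k).1 ((oneDim_F_of_notMem ha).le hx)
        simp only [hx0, map_zero, zero_mem]
  exact comp_mem_factorIdeal hS f g

theorem isFinite_of_isEmpty [IsEmpty α] : IsFinite.{u} k α := by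
  refine ⟨{oneDim k ⊤}, Set.finite_singleton _, fun _ _ => trivial, fun X _ => ?_⟩
  let b := Module.finBasis k X.V
  have hid : 𝟙 X = ∑ i, rankOne ⊤ (b.coord i) (b i) isEmptyElim isEmptyElim :=
    hom_ext fun x => by
      rw [map_sum, LinearMap.sum_apply]
      exact (b.sum_repr x).symm
  rw [addHull, hid]
  exact sum_mem fun i _ => rankOne_mem_factorIdeal _ _ (Set.mem_singleton _)

end PosetRep

theorem exists_isLeast_of_isChain {α : Type*} [Preorder α] [WellFoundedLT α] {C : Set α}
    (hC : IsChain (· ≤ ·) C) (hne : C.Nonempty) : ∃ a, IsLeast C a := by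
  obtain ⟨a, ha⟩ := exists_minimal_of_wellFoundedLT (· ∈ C) hne
  exact ⟨a, ha.1, fun b hb => (hC.total ha.1 hb).elim id fun hba => ha.2 hb hba⟩

section TwoFlags

variable {k : Type*} [Field k]

theorem exists_ne_zero_mem_of_isChain {V : Type*} [AddCommGroup V] [Module k V]
    [Module.Finite k V] [Nontrivial V] {S : Set (Submodule k V)} (hS : IsChain (· ≤ ·) S) :
    ∃ v : V, v ≠ 0 ∧ ∀ G ∈ S, G ≠ ⊥ → v ∈ G := by
  rcases (S \ {⊥}).eq_empty_or_nonempty with hempty | hne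
  · obtain ⟨v, hv⟩ := exists_ne (0 : V)
    exact ⟨v, hv, fun G hG h0 => (hempty.le ⟨hG, h0⟩).elim⟩
  · obtain ⟨H, ⟨_, hH0⟩, hle⟩ := exists_isLeast_of_isChain (hS.mono Set.sdiff_subset) hne
    obtain ⟨v, hv, hv0⟩ := Submodule.exists_mem_ne_zero_of_ne_bot hH0
    exact ⟨v, hv0, fun G hG h0 => hle ⟨hG, h0⟩ hv⟩

theorem exists_dual_le_ker_of_isChain {V : Type*} [AddCommGroup V] [Module k V]
    {T : Set (Submodule k V)} (hT : IsChain (· ≤ ·) T) {v : V} (hv : v ≠ 0) :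
    ∃ φ : Module.Dual k V, φ v = 1 ∧ ∀ G ∈ T, v ∉ G → G ≤ φ.ker := by
  have hsup : v ∉ sSup {G ∈ T | v ∉ G} := by
    rcases {G ∈ T | v ∉ G}.eq_empty_or_nonempty with hempty | hne
    · simpa only [hempty, sSup_empty, Submodule.mem_bot] using hv
    · rw [Submodule.mem_sSup_of_directed hne (hT.mono fun _ h => h.1).directedOn]
      exact fun ⟨G, hG, hvG⟩ => hG.2 hvG
  obtain ⟨φ, hφv, hφ⟩ := Submodule.exists_le_ker_of_notMem hsup
  refine ⟨(φ v)⁻¹ • φ, inv_mul_cancel₀ hφv, fun G hG hvG x hx => ?_⟩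
  have hφx : φ x = 0 := hφ (le_sSup (Set.mem_sep hG hvG) hx)
  rw [LinearMap.mem_ker, LinearMap.smul_apply, hφx, smul_zero]

/-- A family of vectors `b j` and linear forms `φ j` with `∑ φ j x • b j = x` for all `x`, which
restricts to every subspace in `S`. -/
def IsAdaptedFamily {V ι : Type*} [AddCommGroup V] [Module k V] [Fintype ι]
    (S : Set (Submodule k V)) (b : ι → V) (φ : ι → Module.Dual k V) : Prop :=
  (∀ x, ∑ j, φ j x • b j = x) ∧ ∀ G ∈ S, ∀ x ∈ G, ∀ j, φ j x ≠ 0 → b j ∈ G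

theorem IsAdaptedFamily.cons {V : Type*} [AddCommGroup V] [Module k V] {m : ℕ}
    {S : Set (Submodule k V)} {v : V} {φ : Module.Dual k V} (hφ : φ v = 1)
    (hS : ∀ G ∈ S, v ∈ G ∨ G ≤ φ.ker) {b : Fin m → φ.ker} {ψ : Fin m → Module.Dual k φ.ker}
    (h : IsAdaptedFamily (Submodule.comap φ.ker.subtype '' S) b ψ) :
    ∃ (b' : Fin (m + 1) → V) (φ' : Fin (m + 1) → Module.Dual k V), IsAdaptedFamily S b' φ' := by
  let π : V →ₗ[k] φ.ker := LinearMap.codRestrict _ (LinearMap.id - φ.smulRight v) fun x => by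
    simp [hφ]
  have hπ (x : V) : (π x : V) = x - φ x • v := rfl
  refine ⟨Fin.cons v fun j => b j, Fin.cons φ fun j => ψ j ∘ₗ π, fun x => ?_, fun G hG x hx => ?_⟩
  · have hx : ∑ j, ψ j (π x) • (b j : V) = x - φ x • v := by
      simpa only [AddSubmonoidClass.coe_finsetSum, Submodule.coe_smul, hπ] using
        congrArg Subtype.val (h.1 (π x))
    simp only [Fin.sum_univ_succ, Fin.cons_zero, Fin.cons_succ, LinearMap.comp_apply, hx,
      add_sub_cancel]
  · have hor : v ∈ G ∨ φ x = 0 := (hS G hG).imp_right fun hker => hker hx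
    have hπx : (π x : V) ∈ G := by
      rw [hπ]
      rcases hor with hv | h0
      · exact sub_mem hx (G.smul_mem _ hv)
      · simpa only [h0, zero_smul, sub_zero] using hx
    refine Fin.cases (fun h0 => hor.resolve_right h0) fun j hj => ?_
    exact h.2 _ (Set.mem_image_of_mem _ hG) (π x) hπx j hj

theorem exists_isAdaptedFamily_of_isChain (V : Type*) [AddCommGroup V] [Module k V]
    [Module.Finite k V] {S T : Set (Submodule k V)} (hS : IsChain (· ≤ ·) S)
    (hT : IsChain (· ≤ ·) T) :
    ∃ (m : ℕ) (b : Fin m → V) (φ : Fin m → Module.Dual k V), IsAdaptedFamily (S ∪ T) b φ := by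
  induction hd : Module.finrank k V generalizing V with
  | zero =>
    have := Module.finrank_zero_iff.1 hd
    exact ⟨0, Fin.elim0, Fin.elim0, fun x => Subsingleton.elim _ _, fun _ _ _ _ j => j.elim0⟩
  | succ d ih =>
    have : Nontrivial V := Module.nontrivial_of_finrank_pos (R := k) (by omega)
    obtain ⟨v, hv, hvS⟩ := exists_ne_zero_mem_of_isChain hS
    obtain ⟨φ, hφ, hφT⟩ := exists_dual_le_ker_of_isChain hT hv
    have hker : Module.finrank k φ.ker = d := by
      have hsurj : φ.range = ⊤ := LinearMap.range_eq_top.2 fun c => ⟨c • v, by simp [hφ]⟩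
      have hrank := LinearMap.finrank_range_add_finrank_ker φ
      rw [hsurj, finrank_top, Module.finrank_self] at hrank
      omega
    have hmono : Monotone (Submodule.comap φ.ker.subtype) := fun _ _ h => Submodule.comap_mono h
    obtain ⟨m, b, ψ, h⟩ := ih φ.ker (hmono.isChain_image hS) (hmono.isChain_image hT) hker
    refine ⟨m + 1, IsAdaptedFamily.cons hφ ?_ (Set.image_union .. ▸ h)⟩
    rintro G (hG | hG)
    · refine (eq_or_ne G ⊥).symm.imp (hvS G hG) fun h0 => h0.le.trans bot_le
    · exact (em (v ∈ G)).imp_right (hφT G hG)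

end TwoFlags

theorem exists_map_mem_left_sub_mem_right {k V : Type*} [Field k] [AddCommGroup V] [Module k V]
    (P Q : Submodule k V) : ∃ τ : V →ₗ[k] V, ∀ x ∈ P ⊔ Q, τ x ∈ P ∧ τ x - x ∈ Q := by
  let f : P × Q →ₗ[k] V := P.subtype.coprod Q.subtype
  obtain ⟨g, hg⟩ := f.rangeRestrict.exists_rightInverse_of_surjective f.range_rangeRestrict
  obtain ⟨τ, hτ⟩ := LinearMap.exists_extend (P.subtype ∘ₗ LinearMap.fst k P Q ∘ₗ g)
  refine ⟨τ, fun x hx => ?_⟩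
  have hxf : x ∈ f.range := by
    rwa [LinearMap.range_coprod, Submodule.range_subtype, Submodule.range_subtype]
  have hτx : τ x = (g ⟨x, hxf⟩).1 := LinearMap.congr_fun hτ ⟨x, hxf⟩
  have hsum : ((g ⟨x, hxf⟩).1 + (g ⟨x, hxf⟩).2 : V) = x :=
    congrArg Subtype.val (LinearMap.congr_fun hg ⟨x, hxf⟩)
  refine ⟨hτx ▸ (g ⟨x, hxf⟩).1.2, ?_⟩
  rw [hτx, sub_mem_comm_iff, sub_eq_of_eq_add' hsum.symm]
  exact (g ⟨x, hxf⟩).2.2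

namespace PosetRep

variable {k : Type} [Field k] {α : Type w} [Preorder α]

section Gluing

variable {X N : PosetRep.{u} k α} {a : α}

/-- Given a partial section `ι : X(a) → N` of a morphism `N ⟶ X`, the pairs `(x, w)` such that
setting `x ↦ w` extends `ι` compatibly with the subspaces of index `s`. -/
def liftSpace (ι : X.F a →ₗ[k] N.V) (s : α) : Submodule k (X.V × N.V) :=
  (X.F s).prod (N.F s) ⊔ ((X.F a).subtype.prod ι).range

theorem mem_liftSpace {ι : X.F a →ₗ[k] N.V} {s : α} {x : X.V} {w : N.V} :
    (x, w) ∈ liftSpace ι s ↔ ∃ y : X.F a, x - y ∈ X.F s ∧ w - ι y ∈ N.F s := by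
  constructor
  · intro h
    obtain ⟨p, hp, _, ⟨y, rfl⟩, h⟩ := Submodule.mem_sup.1 h
    have hp' : p = (x - y, w - ι y) := eq_sub_of_add_eq h
    subst hp'
    exact ⟨y, hp⟩
  · rintro ⟨y, hx, hw⟩
    exact Submodule.mem_sup.2 ⟨(x - y, w - ι y), ⟨hx, hw⟩, _, ⟨y, rfl⟩,
      Prod.ext (sub_add_cancel _ _) (sub_add_cancel _ _)⟩

theorem mem_of_mem_liftSpace {ι : X.F a →ₗ[k] N.V} {s : α}
    (hι : ∀ y : X.F a, (y : X.V) ∈ X.F s → ι y ∈ N.F s) {x : X.V} {w : N.V}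
    (h : (x, w) ∈ liftSpace ι s) (hx : x ∈ X.F s) : w ∈ N.F s := by
  obtain ⟨y, hxy, hwy⟩ := mem_liftSpace.1 h
  exact ((N.F s).sub_mem_iff_left (hι y ((X.F s).sub_mem_iff_right hx |>.1 hxy))).1 hwy

theorem sub_mem_of_mem_liftSpace {ι : X.F a →ₗ[k] N.V} {s : α} {c : N ⟶ X}
    (hιc : ∀ y, toLin c (ι y) = y) {x : X.V} {w : N.V} (h : (x, w) ∈ liftSpace ι s) :
    x - toLin c w ∈ X.F s := by
  obtain ⟨y, hx, hw⟩ := mem_liftSpace.1 h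
  have hcw := toLin_mem c s hw
  rw [map_sub, hιc] at hcw
  simpa only [sub_sub_sub_cancel_right] using sub_mem hx hcw

theorem exists_adapted_lifts {C₁ C₂ : Set α} (hC₁ : IsChain (· ≤ ·) C₁)
    (hC₂ : IsChain (· ≤ ·) C₂) (hC : ∀ s, s ≤ a ∨ s ∈ C₁ ∪ C₂) {ι : X.F a →ₗ[k] N.V}
    (hlift : ∀ x₀ : X.V, ∃ x w, x - x₀ ∈ X.F a ∧
      ∀ s ∈ C₁ ∪ C₂, x₀ ∈ X.F s ⊔ X.F a → (x, w) ∈ liftSpace ι s) :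
    ∃ (m : ℕ) (x : Fin m → X.V) (w : Fin m → N.V) (φ : Fin m → Module.Dual k X.V),
      (∀ v, v - ∑ j, φ j v • x j ∈ X.F a) ∧
      ∀ s, ∀ v ∈ X.F s, ∀ j, φ j v ≠ 0 → (x j, w j) ∈ liftSpace ι s := by
  let π := (X.F a).mkQ
  have hker (v) : π v = 0 ↔ v ∈ X.F a := Submodule.Quotient.mk_eq_zero _
  have hmono : Monotone fun s => (X.F s).map π := fun _ _ h => Submodule.map_mono (X.F.mono h)
  obtain ⟨m, b, φ, hb, hφ⟩ := exists_isAdaptedFamily_of_isChain _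
    (hmono.isChain_image hC₁) (hmono.isChain_image hC₂)
  choose x₀ hx₀ using fun j => (X.F a).mkQ_surjective (b j)
  choose x w hx hw using fun j => hlift (x₀ j)
  have hxb (j) : π (x j) = b j := hx₀ j ▸ (Submodule.Quotient.eq _).2 (hx j)
  refine ⟨m, x, w, fun j => φ j ∘ₗ π, fun v => ?_, fun s v hv j hj => ?_⟩
  · rw [← hker]
    simp only [map_sub, map_sum, map_smul, hxb, LinearMap.comp_apply, hb, sub_self]
  · have hs : s ∈ C₁ ∪ C₂ := (hC s).resolve_left fun hsa => hj <| by
      rw [LinearMap.comp_apply, (hker v).2 (X.F.mono hsa hv), map_zero]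
    have hbs : b j ∈ (X.F s).map π :=
      hφ _ (Set.image_union .. ▸ Set.mem_image_of_mem _ hs) _ (Submodule.mem_map_of_mem hv) j hj
    refine hw j s hs ?_
    rwa [← hx₀ j, ← Submodule.mem_comap, Submodule.comap_map_mkQ, sup_comm] at hbs

theorem exists_hom_of_adapted_lifts {ι : X.F a →ₗ[k] N.V}
    (hι : ∀ s, ∀ y : X.F a, (y : X.V) ∈ X.F s → ι y ∈ N.F s) {m : ℕ} {x : Fin m → X.V}
    {w : Fin m → N.V} {φ : Fin m → Module.Dual k X.V} (hφ : ∀ v, v - ∑ j, φ j v • x j ∈ X.F a)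
    (hL : ∀ s, ∀ v ∈ X.F s, ∀ j, φ j v ≠ 0 → (x j, w j) ∈ liftSpace ι s) :
    ∃ σ : X ⟶ N, ∀ v, toLin σ v = ι ⟨_, hφ v⟩ + ∑ j, φ j v • w j := by
  let π : X.V →ₗ[k] X.F a := LinearMap.codRestrict _
    (LinearMap.id - ∑ j, (φ j).smulRight (x j)) fun v => by simpa using hφ v
  have hπ (v : X.V) : π v = ⟨_, hφ v⟩ := by
    ext
    simp [π]
  let σ : X.V →ₗ[k] N.V := ι ∘ₗ π + ∑ j, (φ j).smulRight (w j)
  have hσ (v : X.V) : σ v = ι (π v) + ∑ j, φ j v • w j := by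
    simp [σ]
  refine ⟨homMk σ fun s v hv => ?_, fun v => hπ v ▸ hσ v⟩
  have hsum : ((π v : X.V), ι (π v)) + ∑ j, φ j v • (x j, w j) = (v, σ v) := by
    refine Prod.ext ?_ ?_
    · simp [Prod.fst_sum, hπ]
    · simp [Prod.snd_sum, hσ]
  refine mem_of_mem_liftSpace (hι s) ?_ hv
  rw [← hsum]
  refine add_mem (Submodule.mem_sup_right ⟨π v, rfl⟩) (sum_mem fun j _ => ?_)
  by_cases hj : φ j v = 0
  · simp only [hj, zero_smul, zero_mem]
  · exact Submodule.smul_mem _ _ (hL s v hv j hj)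

theorem exists_id_sub_comp_mem_factorIdeal {C₁ C₂ : Set α} (hC₁ : IsChain (· ≤ ·) C₁)
    (hC₂ : IsChain (· ≤ ·) C₂) (hC : ∀ s, s ≤ a ∨ s ∈ C₁ ∪ C₂) (c : N ⟶ X)
    {ι : X.F a →ₗ[k] N.V} (hιc : ∀ y, toLin c (ι y) = y)
    (hι : ∀ s, ∀ y : X.F a, (y : X.V) ∈ X.F s → ι y ∈ N.F s)
    (hlift : ∀ x₀ : X.V, ∃ x w, x - x₀ ∈ X.F a ∧
      ∀ s ∈ C₁ ∪ C₂, x₀ ∈ X.F s ⊔ X.F a → (x, w) ∈ liftSpace ι s) :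
    ∃ σ : X ⟶ N, 𝟙 X - σ ≫ c ∈ factorIdeal (Set.range (oneDim k)) X X := by
  obtain ⟨m, x, w, φ, hφ, hL⟩ := exists_adapted_lifts hC₁ hC₂ hC hlift
  obtain ⟨σ, hσ⟩ := exists_hom_of_adapted_lifts hι hφ hL
  let E (j) : UpperSet α :=
    ⟨{s | ∃ v ∈ X.F s, φ j v ≠ 0}, fun _ _ hst ⟨v, hv, hj⟩ => ⟨v, X.F.mono hst hv, hj⟩⟩
  have hsub : 𝟙 X - σ ≫ c = ∑ j, rankOne (E j) (φ j) (x j - toLin c (w j))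
      (fun s hs v hv => of_not_not fun hj => hs ⟨v, hv, hj⟩)
      fun s ⟨v, hv, hj⟩ => sub_mem_of_mem_liftSpace hιc (hL s v hv j hj) := by
    refine hom_ext fun v => ?_
    have hcσ : toLin c (toLin σ v) = v - ∑ j, φ j v • (x j - toLin c (w j)) := by
      simp only [hσ, map_add, map_sum, map_smul, hιc, smul_sub, Finset.sum_sub_distrib]
      abel
    rw [map_sub, map_sum, LinearMap.sub_apply, LinearMap.sum_apply, toLin_id_apply,
      toLin_comp_apply, hcσ, sub_sub_cancel]
    rfl
  refine ⟨σ, hsub ▸ sum_mem fun j _ => rankOne_mem_factorIdeal _ _ (Set.mem_range_self _)⟩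

end Gluing

end PosetRep

section Derivation

variable {α : Type} [Preorder α]

/-- The poset derived from `α` at `a`, with respect to two chains: its elements are the points
`(s, s)` with `s ≠ a` and the incomparable pairs in `C₁ × C₂`, a pair `(p, q)` standing for the
formal supremum of `p` and `q`. -/
@[ext]
structure DerivedPoset (a : α) (C₁ C₂ : Set α) where
  /-- The first component. -/
  fst : α
  /-- The second component. -/
  snd : α
  cond : (fst = snd ∧ fst ≠ a) ∨ (fst ∈ C₁ ∧ snd ∈ C₂ ∧ ¬ fst ≤ snd ∧ ¬ snd ≤ fst)

namespace DerivedPoset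

variable {a : α} {C₁ C₂ : Set α}

instance : Preorder (DerivedPoset a C₁ C₂) where
  le b c := (b.fst ≤ c.fst ∨ b.fst ≤ c.snd) ∧ (b.snd ≤ c.fst ∨ b.snd ≤ c.snd)
  le_refl b := ⟨Or.inl le_rfl, Or.inr le_rfl⟩
  le_trans b c d := by
    rintro ⟨h₁, h₂⟩ ⟨h₃, h₄⟩
    have key (x : α) (h : x ≤ c.fst ∨ x ≤ c.snd) : x ≤ d.fst ∨ x ≤ d.snd :=
      h.elim (fun h => h₃.imp h.trans h.trans) fun h => h₄.imp h.trans h.trans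
    exact ⟨key _ h₁, key _ h₂⟩

instance [Finite α] : Finite (DerivedPoset a C₁ C₂) :=
  Finite.of_injective (fun b => (b.fst, b.snd)) fun _ _ h =>
    DerivedPoset.ext (congrArg Prod.fst h) (congrArg Prod.snd h)

noncomputable instance : DecidableEq (DerivedPoset a C₁ C₂) := Classical.decEq _

end DerivedPoset

namespace PosetRep

variable {k : Type} [Field k] {a : α} {C₁ C₂ : Set α}

/-- The derived representation: the subspace `X(a)` together with the traces on it of the subspaces
`X(p) + X(q)`. -/
def derived (a : α) (C₁ C₂ : Set α) (X : PosetRep.{u} k α) :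
    PosetRep.{u} k (DerivedPoset a C₁ C₂) where
  V := X.F a
  F := ⟨fun b => (X.F b.fst ⊔ X.F b.snd).comap (X.F a).subtype, fun _ _ h =>
    Submodule.comap_mono <| sup_le
      (h.1.elim (fun h => le_sup_of_le_left (X.F.mono h)) fun h => le_sup_of_le_right (X.F.mono h))
      (h.2.elim (fun h => le_sup_of_le_left (X.F.mono h)) fun h => le_sup_of_le_right (X.F.mono h))⟩

/-- The generators of the subspace of index `s` of the representation integrating `Y`: the ambient
space is `Y ⊕ ⨁ Y`, and for `b = (p, q)` an element `z ∈ Y(b)` is the difference of its lift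
`(0, z)` at `p` and its lift `(-z, z)` at `q`. -/
inductive IntegGen (Y : PosetRep.{u} k (DerivedPoset a C₁ C₂)) (s : α) :
    Y.V × (DerivedPoset a C₁ C₂ → Y.V) → Prop
  | top (h : a ≤ s) (y : Y.V) : IntegGen Y s (y, 0)
  | base {b : DerivedPoset a C₁ C₂} (h : b.fst ≤ s ∧ b.snd ≤ s) {z : Y.V} (hz : z ∈ Y.F b) :
    IntegGen Y s (z, 0)
  | left {b : DerivedPoset a C₁ C₂} (h : b.fst ≤ s) {z : Y.V} (hz : z ∈ Y.F b) :
    IntegGen Y s (0, Pi.single b z)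
  | right {b : DerivedPoset a C₁ C₂} (h : b.snd ≤ s) {z : Y.V} (hz : z ∈ Y.F b) :
    IntegGen Y s (-z, Pi.single b z)

theorem IntegGen.mono {Y : PosetRep.{u} k (DerivedPoset a C₁ C₂)} {s t : α} (hst : s ≤ t)
    {x : Y.V × (DerivedPoset a C₁ C₂ → Y.V)} (hx : IntegGen Y s x) : IntegGen Y t x := by
  cases hx with
  | top h y => exact .top (h.trans hst) y
  | base h hz => exact .base ⟨h.1.trans hst, h.2.trans hst⟩ hz
  | left h hz => exact .left (h.trans hst) hz
  | right h hz => exact .right (h.trans hst) hz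

theorem IntegGen.map {Y Z : PosetRep.{u} k (DerivedPoset a C₁ C₂)} (f : Y ⟶ Z) {s : α}
    {x : Y.V × (DerivedPoset a C₁ C₂ → Y.V)} (hx : IntegGen Y s x) :
    IntegGen Z s (toLin f x.1, fun b => toLin f (x.2 b)) := by
  have hsingle (b : DerivedPoset a C₁ C₂) (z : Y.V) :
      (fun c => toLin f ((Pi.single b z : _ → Y.V) c)) = Pi.single b (toLin f z) :=
    funext (Pi.apply_single (fun _ => toLin f) (fun _ => map_zero _) b z)
  have hzero : (fun b => toLin f ((0 : DerivedPoset a C₁ C₂ → Y.V) b)) = 0 :=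
    funext fun _ => map_zero _
  cases hx with
  | top h y => simpa only [hzero] using IntegGen.top h (toLin f y)
  | base h hz => simpa only [hzero] using IntegGen.base h (toLin_mem f _ hz)
  | left h hz => simpa only [hsingle, map_zero] using IntegGen.left h (toLin_mem f _ hz)
  | right h hz => simpa only [hsingle, map_neg] using IntegGen.right h (toLin_mem f _ hz)

variable [Finite α]

/-- Integration of representations of the derived poset. -/
def integ (a : α) (C₁ C₂ : Set α) :
    PosetRep.{u} k (DerivedPoset a C₁ C₂) ⥤ PosetRep.{u} k α where
  obj Y :=
    { V := Y.V × (DerivedPoset a C₁ C₂ → Y.V)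
      F := ⟨fun s => Submodule.span k {x | IntegGen Y s x}, fun _ _ h =>
        Submodule.span_mono fun _ => IntegGen.mono h⟩ }
  map {Y Z} f := homMk ((toLin f).prodMap ((toLin f).compLeft _)) fun s _ hx =>
    (Submodule.map_span_le _ _ _).2 (fun _ hx => Submodule.subset_span (hx.map f))
      (Submodule.mem_map_of_mem hx)

theorem mem_integ_of_integGen {Y : PosetRep.{u} k (DerivedPoset a C₁ C₂)} {s : α}
    {x : ((integ a C₁ C₂).obj Y).V} (hx : IntegGen Y s x) : x ∈ ((integ a C₁ C₂).obj Y).F s :=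
  Submodule.subset_span (M := Y.V × (DerivedPoset a C₁ C₂ → Y.V)) hx

instance : (integ (k := k) a C₁ C₂).Additive where
  map_add {_ _ f g} := hom_ext fun x => by
    refine Prod.ext ?_ ?_
    · exact congr($(map_add toLin f g) x.1)
    · exact funext fun b => congr($(map_add toLin f g) (x.2 b))

/-- The inclusion of the derived representation in the representation it comes from. -/
def derivedIncl (a : α) (C₁ C₂ : Set α) (X : PosetRep.{u} k α) :
    (derived a C₁ C₂ X).V →ₗ[k] X.V :=
  (X.F a).subtype

theorem exists_integ_derived_hom (X : PosetRep.{u} k α) :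
    ∃ c : (integ a C₁ C₂).obj (derived a C₁ C₂ X) ⟶ X,
      ∀ y, toLin c (y, 0) = derivedIncl a C₁ C₂ X y := by
  have := Fintype.ofFinite (DerivedPoset a C₁ C₂)
  choose τ hτ using fun b : DerivedPoset a C₁ C₂ =>
    exists_map_mem_left_sub_mem_right (X.F b.fst) (X.F b.snd)
  let i := derivedIncl a C₁ C₂ X
  let c := i.coprod (LinearMap.lsum k _ k fun b => τ b ∘ₗ i)
  have hc (y) : c (y, 0) = i y := by
    simp only [c, LinearMap.coprod_apply, map_zero, add_zero]
  have hcs (y b z) : c (y, Pi.single b z) = i y + τ b (i z) := by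
    simp only [c, LinearMap.coprod_apply, LinearMap.lsum_piSingle, LinearMap.comp_apply]
  have hgen (s x) (hx : IntegGen (derived a C₁ C₂ X) s x) : c x ∈ X.F s := by
    cases hx with
    | top h y =>
      rw [hc]
      exact X.F.mono h y.2
    | base h hz =>
      rw [hc]
      exact sup_le (X.F.mono h.1) (X.F.mono h.2) hz
    | left h hz =>
      rw [hcs, map_zero, zero_add]
      exact X.F.mono h (hτ _ _ hz).1
    | right h hz =>
      rw [hcs, map_neg, neg_add_eq_sub]
      exact X.F.mono h (hτ _ _ hz).2
  exact ⟨homMk (X := (integ a C₁ C₂).obj (derived a C₁ C₂ X)) c fun s _ hx =>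
    (Submodule.span_le (p := (X.F s).comap c)).2 (hgen s) hx, hc⟩

theorem isLeast_or_isLeast_or_of_isChain (hC₁ : IsChain (· ≤ ·) C₁) (hC₂ : IsChain (· ≤ ·) C₂)
    {E : Set α} (hE : E ⊆ C₁ ∪ C₂) (hne : E.Nonempty) :
    (∃ m, IsLeast E m) ∨ ∃ b : DerivedPoset a C₁ C₂,
      b.fst ∈ E ∧ b.snd ∈ E ∧ ∀ s ∈ E, b.fst ≤ s ∨ b.snd ≤ s := by
  have hleast {C : Set α} (hC : IsChain (· ≤ ·) C) (h : (E ∩ C).Nonempty) :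
      ∃ m, IsLeast (E ∩ C) m :=
    exists_isLeast_of_isChain (hC.mono Set.inter_subset_right) h
  rcases (E ∩ C₁).eq_empty_or_nonempty with h₁ | h₁
  · have hEC : E ∩ C₂ = E := Set.inter_eq_left.2 fun s hs =>
      (hE hs).resolve_left fun h => h₁.le ⟨hs, h⟩
    exact Or.inl (hEC ▸ hleast hC₂ (hEC.symm ▸ hne))
  rcases (E ∩ C₂).eq_empty_or_nonempty with h₂ | h₂
  · have hEC : E ∩ C₁ = E := Set.inter_eq_left.2 fun s hs =>
      (hE hs).resolve_right fun h => h₂.le ⟨hs, h⟩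
    exact Or.inl (hEC ▸ hleast hC₁ (hEC.symm ▸ hne))
  obtain ⟨p, ⟨hpE, hp⟩, hpmin⟩ := hleast hC₁ h₁
  obtain ⟨q, ⟨hqE, hq⟩, hqmin⟩ := hleast hC₂ h₂
  have hmin (s) (hs : s ∈ E) : p ≤ s ∨ q ≤ s :=
    (hE hs).imp (fun h => hpmin ⟨hs, h⟩) fun h => hqmin ⟨hs, h⟩
  by_cases hpq : p ≤ q
  · exact Or.inl ⟨p, hpE, fun s hs => (hmin s hs).elim id hpq.trans⟩
  by_cases hqp : q ≤ p
  · exact Or.inl ⟨q, hqE, fun s hs => (hmin s hs).elim hqp.trans id⟩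
  exact Or.inr ⟨⟨p, q, Or.inr ⟨hp, hq, hpq, hqp⟩⟩, hpE, hqE, hmin⟩

theorem exists_lift_derived (hC₁ : IsChain (· ≤ ·) C₁) (hC₂ : IsChain (· ≤ ·) C₂)
    (X : PosetRep.{u} k α)
    {ι : X.F a →ₗ[k] ((integ a C₁ C₂).obj (derived a C₁ C₂ X)).V} (hι : ∀ y, ι y = (y, 0))
    (x₀ : X.V) : ∃ x w, x - x₀ ∈ X.F a ∧
      ∀ s ∈ C₁ ∪ C₂, x₀ ∈ X.F s ⊔ X.F a → (x, w) ∈ liftSpace ι s := by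
  have hrep {s} (hs : x₀ ∈ X.F s ⊔ X.F a) : ∃ x ∈ X.F s, x - x₀ ∈ X.F a := by
    obtain ⟨x, hx, y, hy, rfl⟩ := Submodule.mem_sup.1 hs
    exact ⟨x, hx, by simpa using neg_mem hy⟩
  let E : Set α := {s | s ∈ C₁ ∪ C₂ ∧ x₀ ∈ X.F s ⊔ X.F a}
  rcases E.eq_empty_or_nonempty with hE | hE
  · exact ⟨x₀, 0, by simp, fun s hs hx => (hE.le ⟨hs, hx⟩).elim⟩
  obtain ⟨m, hm, hmin⟩ | ⟨b, hp, hq, hb⟩ := isLeast_or_isLeast_or_of_isChain (a := a) hC₁ hC₂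
    (fun _ h => h.1) hE
  · obtain ⟨x, hx, hxa⟩ := hrep hm.2
    exact ⟨x, 0, hxa, fun s hs hxs => Submodule.mem_sup_left
      ⟨X.F.mono (hmin ⟨hs, hxs⟩) hx, zero_mem _⟩⟩
  · obtain ⟨x, hx, hxa⟩ := hrep hp.2
    obtain ⟨y, hy, hya⟩ := hrep hq.2
    let z : X.F a := ⟨x - y, by simpa using sub_mem hxa hya⟩
    have hz : z ∈ (derived a C₁ C₂ X).F b :=
      sub_mem (Submodule.mem_sup_left hx) (Submodule.mem_sup_right hy)
    refine ⟨x, (0, Pi.single b z), hxa, fun s hs hxs => ?_⟩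
    rcases hb s ⟨hs, hxs⟩ with hps | hqs
    · exact Submodule.mem_sup_left ⟨X.F.mono hps hx, mem_integ_of_integGen (.left hps hz)⟩
    · refine mem_liftSpace.2 ⟨z, ?_, ?_⟩
      · simpa [z] using X.F.mono hqs hy
      · rw [hι]
        refine mem_integ_of_integGen ?_
        have hw : ((0, Pi.single b z) - (z, 0) : X.F a × (DerivedPoset a C₁ C₂ → X.F a)) =
            (-z, Pi.single b z) := Prod.ext (zero_sub _) (sub_zero _)
        exact hw ▸ .right hqs hz

theorem IsFinite.of_derivedPoset (hC₁ : IsChain (· ≤ ·) C₁) (hC₂ : IsChain (· ≤ ·) C₂)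
    (hC : ∀ s, s ≤ a ∨ s ∈ C₁ ∪ C₂) (h : IsFinite.{u} k (DerivedPoset a C₁ C₂)) :
    IsFinite.{u} k α := by
  refine h.of_functor (integ a C₁ C₂) (fun _ _ => trivial)
    (Set.finite_range (oneDim k)) (fun _ _ => trivial) fun X _ => ?_
  obtain ⟨c, hc⟩ := exists_integ_derived_hom (a := a) (C₁ := C₁) (C₂ := C₂) X
  let ι : X.F a →ₗ[k] ((integ a C₁ C₂).obj (derived a C₁ C₂ X)).V :=
    LinearMap.inl k (derived a C₁ C₂ X).V _
  have hι (s : α) (y : X.F a) (hy : (y : X.V) ∈ X.F s) :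
      ι y ∈ ((integ a C₁ C₂).obj (derived a C₁ C₂ X)).F s := by
    by_cases hs : s = a
    · exact mem_integ_of_integGen (IntegGen.top (Y := derived a C₁ C₂ X) hs.ge y)
    · let b : DerivedPoset a C₁ C₂ := ⟨s, s, Or.inl ⟨rfl, hs⟩⟩
      have hyb : y ∈ (derived a C₁ C₂ X).F b := Submodule.mem_sup_left hy
      exact mem_integ_of_integGen (.base ⟨le_rfl, le_rfl⟩ hyb)
  obtain ⟨σ, hσ⟩ := exists_id_sub_comp_mem_factorIdeal hC₁ hC₂ hC c (ι := ι) hc hι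
    (exists_lift_derived hC₁ hC₂ X fun _ => rfl)
  exact ⟨_, trivial, σ, c, hσ⟩

end PosetRep

end Derivation

section SetLattice

variable {k : Type} [Field k] {M : Type} [SemilatticeSup M]

theorem PosetRep.IsFinite.of_sup {S T : Set M} [Finite S] {a : M} (ha : a ∈ S) {C₁ C₂ : Set M}
    (hC₁ : IsChain (· ≤ ·) C₁) (hC₂ : IsChain (· ≤ ·) C₂) (hC : ∀ s ∈ S, s ∈ C₁ ∪ C₂ ↔ ¬ s ≤ a)
    (hT : ∀ s ∈ S, s ≠ a → s ∈ T)
    (hsup : ∀ p ∈ C₁, ∀ q ∈ C₂, ¬ p ≤ q → ¬ q ≤ p →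
      p ⊔ q ∈ T ∧ ∀ s ∈ S, s ≠ a → s ≤ p ⊔ q → s ≤ p ∨ s ≤ q)
    (h : IsFinite.{u} k T) : IsFinite.{u} k S := by
  have hchain {C : Set M} (hC : IsChain (· ≤ ·) C) : IsChain (· ≤ ·) ((↑) ⁻¹' C : Set S) :=
    fun x hx y hy hxy => hC hx hy (Subtype.coe_injective.ne hxy)
  refine IsFinite.of_derivedPoset (a := (⟨a, ha⟩ : S)) (hchain hC₁) (hchain hC₂)
    (fun s => or_iff_not_imp_left.2 (hC s s.2).2) ?_
  let D := DerivedPoset (⟨a, ha⟩ : S) ((↑) ⁻¹' C₁) ((↑) ⁻¹' C₂)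
  have hmem (b : D) : (b.fst.1 ⊔ b.snd.1 : M) ∈ T := by
    rcases b.cond with ⟨h, hne⟩ | ⟨hp, hq, hpq, hqp⟩
    · rw [← h, sup_idem]
      exact hT _ b.fst.2 (Subtype.coe_injective.ne hne)
    · exact (hsup _ hp _ hq hpq hqp).1
  have hne (b : D) : b.fst.1 ≠ a ∧ b.snd.1 ≠ a := by
    have hCa {s : S} (hs : s.1 ∈ C₁ ∪ C₂) : s.1 ≠ a := fun h => (hC s s.2).1 hs h.le
    rcases b.cond with ⟨h, hne⟩ | ⟨hp, hq, -⟩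
    · have hb := Subtype.coe_injective.ne hne
      exact ⟨hb, h ▸ hb⟩
    · exact ⟨hCa (Or.inl hp), hCa (Or.inr hq)⟩
  have hprime (b : D) {s : S} (hsa : s.1 ≠ a) :
      s.1 ≤ b.fst.1 ⊔ b.snd.1 ↔ s ≤ b.fst ∨ s ≤ b.snd := by
    refine ⟨fun hs => ?_, fun hs => hs.elim le_sup_of_le_left le_sup_of_le_right⟩
    rcases b.cond with ⟨h, -⟩ | ⟨hp, hq, hpq, hqp⟩
    · rw [← h, sup_idem] at hs
      exact Or.inl hs
    · exact (hsup _ hp _ hq hpq hqp).2 s s.2 hsa hs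
  refine h.of_le_iff_le (fun b : D => (⟨b.fst.1 ⊔ b.snd.1, hmem b⟩ : T)) fun b c => ?_
  rw [Subtype.mk_le_mk, sup_le_iff, hprime c (hne b).1, hprime c (hne b).2]
  rfl

variable [DecidableEq M] [DecidableLE M]

/-- The members of `L` that are not below `a`, split into those comparable with the first of them
and the others. -/
def splitNotLE (a : M) (L : List M) : List M × List M :=
  let R := L.filter (¬ · ≤ a)
  R.partition fun x => ∀ p ∈ R.head?, x ≤ p ∨ p ≤ x

/-- The incomparable pairs of members of the two parts of `splitNotLE a L`. -/
def incompPairs (a : M) (L : List M) : List (M × M) :=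
  ((splitNotLE a L).1 ×ˢ (splitNotLE a L).2).filter fun p => ¬ p.1 ≤ p.2 ∧ ¬ p.2 ≤ p.1

/-- The derivation of the poset `L` at `a` inside `M`, incomparable pairs being replaced by their
suprema. -/
def derivedList (a : M) (L : List M) : List M :=
  L.filter (· ≠ a) ++ (incompPairs a L).map fun p => p.1 ⊔ p.2

/-- The conditions under which `derivedList a L` is the derived poset of `L` at `a`. -/
def IsDerivableAt (a : M) (L : List M) : Prop :=
  a ∈ L ∧ (∀ x ∈ (splitNotLE a L).1, ∀ y ∈ (splitNotLE a L).1, x ≤ y ∨ y ≤ x) ∧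
    (∀ x ∈ (splitNotLE a L).2, ∀ y ∈ (splitNotLE a L).2, x ≤ y ∨ y ≤ x) ∧
    ∀ p ∈ incompPairs a L, ∀ s ∈ L, s ≠ a → s ≤ p.1 ⊔ p.2 → s ≤ p.1 ∨ s ≤ p.2

instance (a : M) (L : List M) : Decidable (IsDerivableAt a L) :=
  inferInstanceAs (Decidable (_ ∧ _))

/-- Successive derivations at the members of the second list exhaust the first one. -/
def IsExhaustedBy : List M → List M → Prop
  | L, [] => L = []
  | L, a :: l => IsDerivableAt a L ∧ IsExhaustedBy (derivedList a L) l

instance IsExhaustedBy.decidable : ∀ L l : List M, Decidable (IsExhaustedBy L l)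
  | L, [] => inferInstanceAs (Decidable (L = []))
  | L, a :: l =>
    have := IsExhaustedBy.decidable (derivedList a L) l
    inferInstanceAs (Decidable (_ ∧ _))

theorem IsDerivableAt.isFinite {a : M} {L : List M} (ha : IsDerivableAt a L)
    (h : PosetRep.IsFinite.{u} k {x // x ∈ derivedList a L}) :
    PosetRep.IsFinite.{u} k {x // x ∈ L} := by
  obtain ⟨ha, hC₁, hC₂, hprime⟩ := ha
  have : Finite {x | x ∈ L} := (List.finite_toSet L).to_subtype
  refine PosetRep.IsFinite.of_sup (S := {x | x ∈ L}) (T := {x | x ∈ derivedList a L})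
    ha (C₁ := {x | x ∈ (splitNotLE a L).1}) (C₂ := {x | x ∈ (splitNotLE a L).2})
    (fun x hx y hy _ => hC₁ x hx y hy) (fun x hx y hy _ => hC₂ x hx y hy) ?_ ?_ ?_ h
  · intro s hs
    exact List.mem_partition.symm.trans
      (List.mem_filter.trans ((and_iff_right hs).trans decide_eq_true_iff))
  · intro s hs hsa
    exact List.mem_append_left _ (List.mem_filter.2 ⟨hs, decide_eq_true hsa⟩)
  · intro p hp q hq hpq hqp
    have hmem : (p, q) ∈ incompPairs a L :=
      List.mem_filter.2 ⟨List.mem_product.2 ⟨hp, hq⟩, decide_eq_true ⟨hpq, hqp⟩⟩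
    exact ⟨List.mem_append_right _ (List.mem_map_of_mem hmem), hprime _ hmem⟩

theorem IsExhaustedBy.isFinite : ∀ {l L : List M}, IsExhaustedBy L l →
    PosetRep.IsFinite.{u} k {x // x ∈ L}
  | [], _, rfl =>
    have : IsEmpty {x : M // x ∈ []} := ⟨fun x => List.not_mem_nil x.2⟩
    PosetRep.isFinite_of_isEmpty
  | _ :: _, _, h => h.1.isFinite h.2.isFinite

end SetLattice

/-- Finite sets of natural numbers, encoded by their binary expansions and ordered by inclusion. -/
def BinarySet : Type := ℕ

namespace BinarySet

instance : DecidableEq BinarySet := inferInstanceAs (DecidableEq ℕ)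

instance : Max BinarySet := ⟨Nat.lor⟩

instance : SemilatticeSup BinarySet := SemilatticeSup.mk' Nat.lor_comm Nat.lor_assoc Nat.or_self

instance : DecidableLE BinarySet := fun x y => inferInstanceAs (Decidable (x ⊔ y = y))

end BinarySet

/-- The subset `{5 * c' + j' | c' ≤ c, j ≤ j'}` of `{0, …, 14}`. These sets form a copy of the grid
`Fin 3 × (Fin 5)ᵒᵈ`. -/
def gridSet (c : Fin 3) (j : Fin 5) : BinarySet :=
  ((32 - 2 ^ (j : ℕ)) * ![1, 33, 1057] c : ℕ)

/-- The list of the sets `gridSet c j`. -/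
def gridSets : List BinarySet :=
  (List.finRange 3).flatMap fun c => (List.finRange 5).map (gridSet c)

theorem gridSet_mem_gridSets (c : Fin 3) (j : Fin 5) : gridSet c j ∈ gridSets :=
  List.mem_flatMap.2 ⟨c, List.mem_finRange c, List.mem_map_of_mem (List.mem_finRange j)⟩

theorem gridSet_le_gridSet_iff :
    ∀ (c c' : Fin 3) (j j' : Fin 5), gridSet c j ≤ gridSet c' j' ↔ c ≤ c' ∧ j' ≤ j := by
  decide +kernel

/-- A sequence of points of derivation which reduces `gridSets` to the empty poset. -/
def gridExhaustion : List BinarySet :=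
  ([32767, 31710, 1023, 29596, 991, 990, 25375, 16927, 25500, 924, 25375, 25374, 16927, 16926,
    25375, 799, 25368, 31, 17176, 30, 17176, 792, 16924, 28, 16912, 24, 528, 16] : List ℕ)

theorem gridSets_isExhaustedBy : IsExhaustedBy gridSets gridExhaustion := by
  decide +kernel

theorem PosetRep.isFinite_grid (k : Type) [Field k] {n : ℕ} (hn : n ≤ 5) :
    IsFinite.{u} k (Fin 3 × (Fin n)ᵒᵈ) :=
  gridSets_isExhaustedBy.isFinite.of_le_iff_le
    (fun p => ⟨gridSet p.1 (Fin.castLE hn (OrderDual.ofDual p.2)), gridSet_mem_gridSets _ _⟩)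
    fun _ _ => gridSet_le_gridSet_iff _ _ _ _

section MonoArrow

variable {R : Type*} [Ring R] {X Y : Arrow (ModuleCat.{u} R)}

theorem arrow_hom_ext_of_mono_s18 [Mono Y.hom] {f g : X ⟶ Y} (h : f.right = g.right) : f = g :=
  Arrow.hom_ext _ _ ((cancel_mono Y.hom).1 (by rw [Arrow.w f, Arrow.w g, h])) h

/-- The morphism of arrows into a monomorphism determined by its component on codomains. -/
noncomputable def monoArrowHomMk [Mono Y.hom] (f : X.right ⟶ Y.right)
    (h : ∀ x, f (X.hom x) ∈ LinearMap.range Y.hom.hom) : X ⟶ Y :=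
  let e := LinearEquiv.ofInjective Y.hom.hom ((ModuleCat.mono_iff_injective Y.hom).1 inferInstance)
  Arrow.homMk (ModuleCat.ofHom (e.symm.toLinearMap ∘ₗ
    (f.hom ∘ₗ X.hom.hom).codRestrict (LinearMap.range Y.hom.hom) h)) f
    (by ext x; exact congrArg Subtype.val (e.apply_symm_apply ⟨_, h x⟩))

theorem arrow_right_mem_range (f : X ⟶ Y) {x : X.right} (hx : x ∈ LinearMap.range X.hom.hom) :
    f.right x ∈ LinearMap.range Y.hom.hom := by
  obtain ⟨x, rfl⟩ := hx
  exact ⟨f.left x, ConcreteCategory.congr_hom (Arrow.w f) x⟩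

theorem finite_left_of_mono [IsNoetherianRing R] [Mono X.hom] [Module.Finite R X.right] :
    Module.Finite R X.left :=
  Module.Finite.of_injective X.hom.hom ((ModuleCat.mono_iff_injective X.hom).1 inferInstance)

end MonoArrow

section Subquotient

variable {R : Type*} [Ring R] {L L' : Type u} [AddCommGroup L] [Module R L] [AddCommGroup L']
  [Module R L']

/-- The inclusion `F 1 / F 0 → F 2 / F 0` attached to submodules `F 0 ≤ F 1 ≤ F 2`. -/
def subquotientArrow (F : Fin 3 →o Submodule R L) : Arrow (ModuleCat.{u} R) :=
  Arrow.mk (ModuleCat.ofHom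
    (((F 1).submoduleOf (F 2)).map ((F 0).submoduleOf (F 2)).mkQ).subtype)

instance (F : Fin 3 →o Submodule R L) : Mono (subquotientArrow F).hom :=
  (ModuleCat.mono_iff_injective _).2 (Submodule.subtype_injective _)

/-- The class of an element of `F 2` in `F 2 / F 0`. -/
def subquotientMk (F : Fin 3 →o Submodule R L) : F 2 →ₗ[R] (subquotientArrow F).right :=
  ((F 0).submoduleOf (F 2)).mkQ

variable {F : Fin 3 →o Submodule R L} {F' : Fin 3 →o Submodule R L'}

theorem subquotientMk_surjective : Function.Surjective (subquotientMk F) :=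
  Submodule.mkQ_surjective _

theorem subquotientMk_eq_zero {x : F 2} : subquotientMk F x = 0 ↔ (x : L) ∈ F 0 :=
  Submodule.Quotient.mk_eq_zero _

theorem subquotientMk_mem_range {x : F 2} :
    subquotientMk F x ∈ LinearMap.range (subquotientArrow F).hom.hom ↔ (x : L) ∈ F 1 := by
  constructor
  · rintro ⟨⟨_, y, hy, rfl⟩, hyx⟩
    have hxy : subquotientMk F (x - y) = 0 := by rw [map_sub, sub_eq_zero]; exact hyx.symm
    rw [← sub_add_cancel x y]
    exact add_mem (F.mono (Fin.zero_le 1) (subquotientMk_eq_zero.1 hxy)) hy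
  · exact fun hx => ⟨⟨_, x, hx, rfl⟩, rfl⟩

/-- The morphism of subquotients induced by a linear map. -/
noncomputable def subquotientMap (f : L →ₗ[R] L') (hf : ∀ c, ∀ x ∈ F c, f x ∈ F' c) :
    subquotientArrow F ⟶ subquotientArrow F' :=
  monoArrowHomMk (ModuleCat.ofHom (Submodule.mapQ _ _ (f.restrict (hf 2)) fun x => hf 0 x)) <| by
    rintro ⟨_, x, hx, rfl⟩
    exact subquotientMk_mem_range.2 (hf 1 x hx)

theorem subquotientArrow_hom_ext {Y : Arrow (ModuleCat.{u} R)} [Mono Y.hom]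
    {f g : subquotientArrow F ⟶ Y}
    (h : ∀ x, f.right (subquotientMk F x) = g.right (subquotientMk F x)) : f = g :=
  arrow_hom_ext_of_mono_s18 (ModuleCat.hom_ext (LinearMap.ext fun y => by
    obtain ⟨x, rfl⟩ := subquotientMk_surjective y
    exact h x))

/-- A module homomorphism `F 2 → X.right` with kernel `F 0` for which `F 1` is the preimage of the
range of `X` identifies `subquotientArrow F` with `X`. -/
noncomputable def subquotientIso {X : Arrow (ModuleCat.{u} R)} [Mono X.hom] (ρ : F 2 →ₗ[R] X.right)
    (hρ : Function.Surjective ρ) (h0 : ∀ x, ρ x = 0 ↔ (x : L) ∈ F 0)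
    (h1 : ∀ x, ρ x ∈ LinearMap.range X.hom.hom ↔ (x : L) ∈ F 1) : subquotientArrow F ≅ X :=
  let e : (subquotientArrow F).right ≅ X.right := LinearEquiv.toModuleIso <|
    (Submodule.quotEquivOfEq _ _ (Submodule.ext fun x => (h0 x).symm)).trans
      (ρ.quotKerEquivOfSurjective hρ)
  { hom := monoArrowHomMk e.hom <| by
      rintro ⟨_, x, hx, rfl⟩
      exact (h1 x).2 hx
    inv := monoArrowHomMk e.inv fun x => by
      obtain ⟨y, hy⟩ := hρ (X.hom x)
      have hxy : e.inv (X.hom x) = subquotientMk F y := by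
        rw [← hy]
        exact e.hom_inv_id_apply (subquotientMk F y)
      rw [hxy, subquotientMk_mem_range, ← h1, hy]
      exact LinearMap.mem_range_self _ x
    hom_inv_id := arrow_hom_ext_of_mono_s18 e.hom_inv_id
    inv_hom_id := arrow_hom_ext_of_mono_s18 e.inv_hom_id }

theorem finite_subquotientArrow_right [IsNoetherianRing R] [Module.Finite R L] :
    Module.Finite R (subquotientArrow F).right :=
  Module.Finite.of_surjective _ (subquotientMk_surjective (F := F))

end Subquotient

section Rows

variable (k : Type) [Field k] (n : ℕ)

/-- The opposite of the algebra of lower triangular matrices; its left modules are the right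
modules over lower triangular matrices. -/
abbrev OpLowerTriangular : Type := (lowerTriangularAlg k n)ᵐᵒᵖ

/-- Row vectors with entries in a vector space `W`, as a right module over lower triangular
matrices. -/
def Rows (W : Type u) : Type u := Fin n → W

variable {k n} {W W' : Type u} [AddCommGroup W] [Module k W] [AddCommGroup W'] [Module k W']

instance : AddCommGroup (Rows n W) := inferInstanceAs (AddCommGroup (Fin n → W))

instance : Module k (Rows n W) := inferInstanceAs (Module k (Fin n → W))

instance [Module.Finite k W] : Module.Finite k (Rows n W) :=
  inferInstanceAs (Module.Finite k (Fin n → W))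

open scoped Matrix.Module in
instance : Module (OpLowerTriangular k n) (Rows n W) :=
  letI : Module (Matrix (Fin n) (Fin n) k) (Rows n W) :=
    inferInstanceAs (Module (Matrix (Fin n) (Fin n) k) (Fin n → W))
  Module.compHom _ ((Matrix.transposeAlgEquiv (Fin n) k k).symm.toAlgHom.comp
    (AlgHom.op (lowerTriangularAlg k n).val) :
      OpLowerTriangular k n →ₐ[k] Matrix (Fin n) (Fin n) k).toRingHom

theorem Rows.smul_apply (A : OpLowerTriangular k n) (f : Rows n W) (j : Fin n) :
    (A • f) j = ∑ i, A.unop.1 i j • f i := rfl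

instance : IsScalarTower k (OpLowerTriangular k n) (Rows n W) :=
  ⟨fun c A f => funext fun j => by
    calc ∑ i, (c • A.unop.1 i j) • f i = ∑ i, c • A.unop.1 i j • f i :=
          Finset.sum_congr rfl fun i _ => smul_assoc c (A.unop.1 i j) (f i)
      _ = c • ∑ i, A.unop.1 i j • f i := Finset.smul_sum.symm⟩

/-- The map of row modules obtained by applying a linear map to every entry. -/
def Rows.map (f : W →ₗ[k] W') : Rows n W →ₗ[OpLowerTriangular k n] Rows n W' where
  toFun m j := f (m j)
  map_add' a b := funext fun j => map_add f (a j) (b j)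
  map_smul' A m := funext fun j => by
    calc f (∑ i, A.unop.1 i j • m i) = ∑ i, f (A.unop.1 i j • m i) := map_sum f _ _
      _ = ∑ i, A.unop.1 i j • f (m i) := Finset.sum_congr rfl fun i _ => map_smul f _ _

variable (M : PosetRep.{u} k (Fin 3 × (Fin n)ᵒᵈ))

/-- The rows whose `j`-th entry lies in the `j`-th subspace of the layer `c`. -/
def rowFlag : Fin 3 →o Submodule (OpLowerTriangular k n) (Rows n M.V) where
  toFun c :=
    { carrier := {f | ∀ j, f j ∈ M.F (c, OrderDual.toDual j)}
      add_mem' := fun hf hg j => add_mem (hf j) (hg j)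
      zero_mem' := fun j => zero_mem _
      smul_mem' := fun A f hf j => by
        rw [Rows.smul_apply]
        refine sum_mem fun i _ => ?_
        rcases lt_or_ge i j with h | h
        · rw [A.unop.2 i j h, zero_smul]
          exact zero_mem _
        · exact Submodule.smul_mem _ _ (M.F.mono (Prod.mk_le_mk.2 ⟨le_rfl, h⟩) (hf i)) }
  monotone' _ _ hc _ hf j := M.F.mono (Prod.mk_le_mk.2 ⟨hc, le_rfl⟩) (hf j)

theorem mem_rowFlag {M : PosetRep.{u} k (Fin 3 × (Fin n)ᵒᵈ)} {c : Fin 3} {f : Rows n M.V} :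
    f ∈ rowFlag M c ↔ ∀ j, f j ∈ M.F (c, OrderDual.toDual j) := Iff.rfl

/-- A representation of the grid given by `K j ≤ Q j ≤ P j`, for `j` in `Fin n`, is sent to the
monomorphism `Q / K → P / K` of right modules over lower triangular matrices. -/
noncomputable def gridToArrow (k : Type) [Field k] (n : ℕ) :
    PosetRep.{u} k (Fin 3 × (Fin n)ᵒᵈ) ⥤ Arrow (ModuleCat.{u} (OpLowerTriangular k n)) where
  obj M := subquotientArrow (rowFlag M)
  map f := subquotientMap (Rows.map (PosetRep.toLin f)) fun _ _ hm j =>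
    PosetRep.toLin_mem f _ (hm j)
  map_id _ := subquotientArrow_hom_ext fun _ => rfl
  map_comp _ _ := subquotientArrow_hom_ext fun _ => rfl

instance : Mono ((gridToArrow k n).obj M).hom :=
  inferInstanceAs (Mono (subquotientArrow _).hom)

instance : (gridToArrow.{u} k n).Additive where
  map_add := subquotientArrow_hom_ext fun _ => rfl

theorem sModObj_gridToArrow : SModObj (lowerTriangularAlg k n) ((gridToArrow k n).obj M) := by
  have : IsNoetherianRing (OpLowerTriangular k n) :=
    isNoetherian_of_tower k (inferInstanceAs (IsNoetherian k (OpLowerTriangular k n)))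
  have : Module.Finite (OpLowerTriangular k n) (Rows n M.V) :=
    Module.Finite.of_restrictScalars_finite k _ _
  have hright : Module.Finite (OpLowerTriangular k n) ((gridToArrow k n).obj M).right :=
    finite_subquotientArrow_right
  exact ⟨finite_left_of_mono, hright, inferInstance⟩

end Rows

section ElementaryMatrices

variable {k : Type} [Field k] {n : ℕ}

/-- The elementary matrix with a one in position `(i, j)`, viewed in the opposite algebra; it is
replaced by zero when this position is above the diagonal. -/
def opElem (i j : Fin n) : OpLowerTriangular k n :=
  .op ⟨Matrix.single i j (if j ≤ i then 1 else 0), fun a b hab => by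
    rw [Matrix.single_apply]
    split_ifs with h h' <;> [exact absurd h' (h.1 ▸ h.2 ▸ hab.not_ge); rfl; rfl]⟩

theorem opElem_mul_opElem {i j l : Fin n} (h : j ≤ i) (h' : l ≤ j) :
    opElem (k := k) j l * opElem i j = opElem i l :=
  MulOpposite.unop_injective <| Subtype.ext <| by
    simp [opElem, h, h', h'.trans h]

theorem unop_sum_coe_apply {ι : Type*} (s : Finset ι) (f : ι → OpLowerTriangular k n)
    (a b : Fin n) : (∑ i ∈ s, f i).unop.1 a b = ∑ i ∈ s, (f i).unop.1 a b := by
  simp [Finset.unop_sum, Matrix.sum_apply]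

theorem sum_opElem_self : ∑ j, opElem (k := k) (n := n) j j = 1 :=
  MulOpposite.unop_injective <| Subtype.ext <| Matrix.ext fun a b => by
    rw [unop_sum_coe_apply]
    simp [opElem, Matrix.single_apply, Matrix.one_apply, ite_and]

theorem mul_opElem_self (A : OpLowerTriangular k n) (i : Fin n) :
    A * opElem i i = ∑ j, A.unop.1 i j • opElem i j :=
  MulOpposite.unop_injective <| Subtype.ext <| Matrix.ext fun a b => by
    rw [unop_sum_coe_apply]
    by_cases h : b ≤ i
    · simp [opElem, Matrix.single_apply, ite_and, Matrix.mul_apply, h]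
    · simp [opElem, Matrix.single_apply, ite_and, Matrix.mul_apply, h, A.unop.2 i b (not_le.1 h)]

end ElementaryMatrices

section Presentation

open scoped ModuleCat

variable {k : Type} [Field k] {n : ℕ}

section

variable {V : Type u} [AddCommGroup V] [Module k V] [Module (OpLowerTriangular k n) V]
  [IsScalarTower k (OpLowerTriangular k n) V]

variable (k V) in
/-- The map `w ↦ ∑ i, w i * E i j`, written for right modules. -/
noncomputable def colAction (j : Fin n) : (Fin n → V) →ₗ[k] V :=
  ∑ i, Algebra.lsmul k k V (opElem (k := k) i j) ∘ₗ LinearMap.proj i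

theorem colAction_apply (j : Fin n) (w : Fin n → V) :
    colAction k V j w = ∑ i, opElem (k := k) i j • w i := by
  simp only [colAction, LinearMap.sum_apply, LinearMap.comp_apply, LinearMap.proj_apply,
    Algebra.lsmul_coe]

theorem colAction_single (i j : Fin n) (v : V) :
    colAction k V j (Pi.single i v) = opElem (k := k) i j • v := by
  rw [colAction_apply, Finset.sum_eq_single i, Pi.single_eq_same]
  · intro i' _ hi
    rw [Pi.single_eq_of_ne hi, smul_zero]
  · exact fun hi => absurd (Finset.mem_univ i) hi

theorem opElem_smul_colAction {j j' : Fin n} (h : j' ≤ j) {w : Fin n → V}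
    (hw : ∀ i < j, w i = 0) :
    opElem (k := k) j j' • colAction k V j w = colAction k V j' w := by
  rw [colAction_apply, colAction_apply, Finset.smul_sum]
  refine Finset.sum_congr rfl fun i _ => ?_
  rcases lt_or_ge i j with hi | hi
  · rw [hw i hi, smul_zero, smul_zero, smul_zero]
  · rw [smul_smul, opElem_mul_opElem hi h]

theorem smul_colAction_self (A : OpLowerTriangular k n) (i : Fin n) {w : Fin n → V}
    (hw : ∀ l < i, w l = 0) :
    A • colAction k V i w = ∑ j, A.unop.1 i j • colAction k V j w := by
  rw [← opElem_smul_colAction (k := k) le_rfl hw, smul_smul, mul_opElem_self, Finset.sum_smul]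
  refine Finset.sum_congr rfl fun j _ => ?_
  rw [smul_assoc]
  rcases lt_or_ge i j with h | h
  · rw [A.unop.2 i j h, zero_smul, zero_smul]
  · rw [opElem_smul_colAction h hw]

end

variable (X : Arrow (ModuleCat.{u} (OpLowerTriangular k n)))

/-- The submodules `0 ≤ range X.hom ≤ X.right`. -/
def rangeFlag : Fin 3 →o Submodule (OpLowerTriangular k n) X.right where
  toFun := ![⊥, LinearMap.range X.hom.hom, ⊤]
  monotone' := by
    rw [Fin.monotone_iff_le_succ]
    intro i
    fin_cases i
    exacts [bot_le, le_top]

variable [Module.Finite (OpLowerTriangular k n) X.right]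

/-- The grid representation attached to an arrow `X` of right modules over `lowerTriangularAlg k n`.
Its rows form the tensor product of `X.right` with the algebra, `colAction` is a component of the
multiplication map, and the layers are the preimages of `0 ≤ range X.hom ≤ X.right`. -/
noncomputable def arrowToGrid : PosetRep.{u} k (Fin 3 × (Fin n)ᵒᵈ) where
  V := Fin n → X.right
  finite :=
    have : Module.Finite k X.right := Module.Finite.trans (OpLowerTriangular k n) _
    inferInstance
  F :=
    { toFun p := Submodule.pi (Set.Iio p.2.ofDual) (fun _ => ⊥) ⊓
        ((rangeFlag X p.1).restrictScalars k).comap (colAction k X.right p.2.ofDual)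
      monotone' := by
        rintro ⟨c, j⟩ ⟨c', j'⟩ ⟨hc, hj⟩ w ⟨hw, hw'⟩
        change j'.ofDual ≤ j.ofDual at hj
        refine ⟨fun i hi => hw i (hi.trans_le hj), (rangeFlag X).mono hc ?_⟩
        rw [← opElem_smul_colAction (k := k) hj hw]
        exact Submodule.smul_mem _ _ hw' }

/-- The multiplication map from the rows of `arrowToGrid X` to `X.right`. -/
noncomputable def rowMul :
    rowFlag (arrowToGrid X) 2 →ₗ[OpLowerTriangular k n] X.right where
  toFun f := ∑ j, colAction k X.right j (f.1 j)
  map_add' f g := by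
    rw [← Finset.sum_add_distrib]
    exact Finset.sum_congr rfl fun j _ => map_add (colAction k X.right j) _ _
  map_smul' A f := by
    have hA (j : Fin n) : colAction k X.right j (∑ i, A.unop.1 i j • f.1 i) =
        ∑ i, A.unop.1 i j • colAction k X.right j (f.1 i) :=
      (map_sum _ _ _).trans (Finset.sum_congr rfl fun i _ => map_smul _ _ _)
    calc ∑ j, colAction k X.right j (∑ i, A.unop.1 i j • f.1 i)
        = ∑ i, ∑ j, A.unop.1 i j • colAction k X.right j (f.1 i) := by
          simp only [hA]
          exact Finset.sum_comm
      _ = ∑ i, A • colAction k X.right i (f.1 i) :=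
          Finset.sum_congr rfl fun i _ => (smul_colAction_self A i (f.2 i).1).symm
      _ = A • ∑ i, colAction k X.right i (f.1 i) := Finset.smul_sum.symm

theorem rowMul_apply (f : rowFlag (arrowToGrid X) 2) :
    rowMul X f = ∑ j, colAction k X.right j (f.1 j) := rfl

theorem rowMul_surjective : Function.Surjective (rowMul X) := fun v => by
  refine ⟨⟨fun j => Pi.single j v, fun j => ⟨fun i hi => Pi.single_eq_of_ne hi.ne _, trivial⟩⟩, ?_⟩
  calc ∑ j, colAction k X.right j (Pi.single j v) = ∑ j, opElem (k := k) j j • v :=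
        Finset.sum_congr rfl fun j _ => colAction_single j j v
    _ = v := by rw [← Finset.sum_smul, sum_opElem_self, one_smul]

theorem opElem_self_smul_rowMul (f : rowFlag (arrowToGrid X) 2) (j : Fin n) :
    opElem (k := k) j j • rowMul X f = colAction k X.right j (f.1 j) := by
  have hE (i : Fin n) : opElem (k := k) j j • colAction k X.right i (f.1 i) =
      if i = j then colAction k X.right j (f.1 j) else 0 := by
    rw [smul_colAction_self _ i (f.2 i).1]
    split_ifs with h
    · simp [opElem, Matrix.single_apply, h]
    · simp [opElem, Ne.symm h]
  rw [rowMul_apply, Finset.smul_sum, Finset.sum_congr rfl fun i _ => hE i, Finset.sum_ite_eq',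
    if_pos (Finset.mem_univ j)]

theorem rowMul_mem_rangeFlag {f : rowFlag (arrowToGrid X) 2} {c : Fin 3} :
    rowMul X f ∈ rangeFlag X c ↔ f.1 ∈ rowFlag (arrowToGrid X) c := by
  refine ⟨fun h j => ⟨(f.2 j).1, ?_⟩, fun h => (rowMul_apply X f).symm ▸ sum_mem fun j _ => (h j).2⟩
  change colAction k X.right j (f.1 j) ∈ rangeFlag X c
  rw [← opElem_self_smul_rowMul]
  exact Submodule.smul_mem _ _ h

/-- Every monomorphism of finitely generated right modules over lower triangular matrices comes from
a representation of the grid. -/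
noncomputable def gridToArrowArrowToGrid [Mono X.hom] :
    (gridToArrow k n).obj (arrowToGrid X) ≅ X :=
  subquotientIso (rowMul X) (rowMul_surjective X)
    (fun _ => rowMul_mem_rangeFlag (c := 0) X) fun _ => rowMul_mem_rangeFlag (c := 1) X

variable (k n) in
theorem hasFiniteAddGenerators_sModObj (h : PosetRep.IsFinite.{u} k (Fin 3 × (Fin n)ᵒᵈ)) :
    HasFiniteAddGenerators.{u + 1}
      (SModObj.{u} (lowerTriangularAlg k n) : ObjectProperty (Arrow (ModuleCat.{u} _))) :=
  h.of_retracts (gridToArrow k n) (fun M _ => sModObj_gridToArrow M) fun X ⟨_, _, _⟩ =>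
    ⟨arrowToGrid X, trivial, ⟨(gridToArrowArrowToGrid X).symm.retract⟩⟩

end Presentation

section LocalEndomorphismRings

/-- The ring `E` has no idempotents except `0` and `1`. For the endomorphism ring of a nonzero
object this is indecomposability, as soon as idempotents split. -/
def HasTrivialIdempotents (E : Type*) [Ring E] : Prop :=
  ∀ e : E, IsIdempotentElem e → e = 0 ∨ e = 1

-- The Fitting decomposition of right multiplication by `x`, applied to `1`.
theorem HasTrivialIdempotents.isUnit_or_isNilpotent {E : Type*} [Ring E] [IsArtinianRing E]
    (h : HasTrivialIdempotents E) (x : E) : IsUnit x ∨ IsNilpotent x := by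
  let f : Module.End E E := LinearMap.toSpanSingleton E E x
  have hf (n : ℕ) (a : E) : (f ^ n) a = a * x ^ n := by
    induction n generalizing a with
    | zero => simp
    | succ n ih => rw [pow_succ, Module.End.mul_apply, ih, pow_succ', ← mul_assoc]; rfl
  obtain ⟨n, hfit, hn⟩ :=
    (f.eventually_isCompl_ker_pow_range_pow.and (Filter.eventually_ne_atTop 0)).exists
  obtain ⟨a, ha, b, hb, hab⟩ := Submodule.mem_sup.1 (hfit.sup_eq_top ▸ Submodule.mem_top (x := 1))
  have hmul : a * b = a - a * a := by rw [eq_sub_iff_add_eq', ← mul_add, hab, mul_one]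
  have hab0 : a * b = 0 := Submodule.disjoint_def.1 hfit.disjoint _
    (hmul ▸ sub_mem ha (Submodule.smul_mem _ a ha)) (Submodule.smul_mem _ a hb)
  rcases h a (sub_eq_zero.1 (hmul ▸ hab0)).symm with rfl | rfl
  · obtain ⟨c, rfl⟩ := hb
    rw [zero_add, hf] at hab
    exact .inl ((isUnit_pow_iff hn).1 (IsUnit.of_mul_eq_one_right c hab))
  · exact .inr ⟨n, by simpa only [hf, one_mul] using LinearMap.mem_ker.1 ha⟩

theorem HasTrivialIdempotents.isLocalRing {E : Type*} [Ring E] [Nontrivial E] [IsArtinianRing E]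
    (h : HasTrivialIdempotents E) : IsLocalRing E where
  isUnit_or_isUnit_of_add_one {a b} hab := by
    refine (h.isUnit_or_isNilpotent a).imp_right fun ha => ?_
    obtain rfl : b = 1 - a := eq_sub_of_add_eq' hab
    exact ha.isUnit_one_sub

variable {C : Type*} [Category C] [Preadditive C]

theorem exists_retract_of_addHull {S : Set C} {X : C} [IsLocalRing (End X)] (h : addHull S X) :
    ∃ M ∈ S, Nonempty (Retract X M) := by
  suffices key : ∀ e : End X, e ∈ factorIdeal S X X → IsUnit e →
      ∃ M ∈ S, Nonempty (Retract X M) from key 1 h isUnit_one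
  intro e he
  induction he using AddSubgroup.closure_induction with
  | mem e he =>
    obtain ⟨M, hM, f, g, rfl⟩ := he
    intro hu
    obtain ⟨c, hc⟩ := hu.exists_right_inv
    exact ⟨M, hM, ⟨c ≫ f, g, (Category.assoc _ _ _).trans hc⟩⟩
  | zero => exact fun h => absurd h not_isUnit_zero
  | add a b _ _ iha ihb =>
    exact fun h => (IsLocalRing.isUnit_or_isUnit_of_isUnit_add h).elim iha ihb
  | neg a _ ih => exact fun h => ih ((IsUnit.neg_iff a).1 h)

theorem isZero_of_retract_comp_eq_zero {X M : C} (r : Retract X M) (h : r.r ≫ r.i = 0) :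
    IsZero X := by
  refine (IsZero.iff_id_eq_zero X).2 ?_
  calc 𝟙 X = r.i ≫ (r.r ≫ r.i) ≫ r.r := by simp
    _ = 0 := by rw [h, zero_comp, comp_zero]

theorem HasTrivialIdempotents.retract_comp_eq_id {X M : C} (hM : HasTrivialIdempotents (End M))
    (r : Retract X M) (hX : ¬ IsZero X) : r.r ≫ r.i = 𝟙 M :=
  (hM (r.r ≫ r.i) (by simp [IsIdempotentElem, End.mul_def])).resolve_left fun h =>
    hX (isZero_of_retract_comp_eq_zero r h)

theorem finrank_end_lt_of_retract (k : Type*) [Field k] [Linear k C] {X M : C}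
    [Module.Finite k (End M)] (r : Retract X M) (h : r.r ≫ r.i ≠ 𝟙 M) :
    Module.finrank k (End X) < Module.finrank k (End M) := by
  let Φ : End X →ₗ[k] End M := Linear.leftComp k M r.r ∘ₗ Linear.rightComp k X r.i
  have hΦ (f : End X) : Φ f = r.r ≫ f ≫ r.i := rfl
  have hinj : Function.Injective Φ := fun f g hfg => by
    simpa [hΦ] using congrArg (fun a => r.i ≫ a ≫ r.r) hfg
  rw [← LinearMap.finrank_range_of_inj hinj]
  refine Submodule.finrank_lt fun htop => h ?_
  obtain ⟨f, hf⟩ := LinearMap.range_eq_top.1 htop (𝟙 M)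
  calc r.r ≫ r.i = r.r ≫ r.i ≫ Φ f := by rw [hf, Category.comp_id]
    _ = Φ f := by simp [hΦ]
    _ = 𝟙 M := hf

theorem exists_retracts_of_iso_binaryBicone {X Y Z : C} (b : BinaryBicone Y Z)
    (hb : b.fst ≫ b.inl + b.snd ≫ b.inr = 𝟙 b.pt) (φ : X ≅ b.pt) :
    ∃ (r : Retract Y X) (s : Retract Z X), r.r ≫ r.i + s.r ≫ s.i = 𝟙 X := by
  refine ⟨⟨b.inl ≫ φ.inv, φ.hom ≫ b.fst, by simp⟩, ⟨b.inr ≫ φ.inv, φ.hom ≫ b.snd, by simp⟩, ?_⟩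
  calc (φ.hom ≫ b.fst) ≫ b.inl ≫ φ.inv + (φ.hom ≫ b.snd) ≫ b.inr ≫ φ.inv
      = φ.hom ≫ (b.fst ≫ b.inl + b.snd ≫ b.inr) ≫ φ.inv := by
        simp only [Preadditive.add_comp, Preadditive.comp_add, Category.assoc]
    _ = 𝟙 X := by rw [hb, Category.id_comp, φ.hom_inv_id]

theorem retract_i_comp_retract_r_eq_zero {X Y Z : C} {r : Retract Y X} {s : Retract Z X}
    (h : r.r ≫ r.i + s.r ≫ s.i = 𝟙 X) : r.i ≫ s.r = 0 := by
  have hsum : r.i ≫ (r.r ≫ r.i + s.r ≫ s.i) ≫ s.r = r.i ≫ s.r := by rw [h, Category.id_comp]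
  simpa using hsum

theorem addHull_of_retracts {S : Set C} {X Y Z : C} {r : Retract Y X} {s : Retract Z X}
    (h : r.r ≫ r.i + s.r ≫ s.i = 𝟙 X) (hY : addHull S Y) (hZ : addHull S Z) : addHull S X := by
  rw [addHull, ← h]
  simpa only [Category.id_comp] using
    add_mem (factorIdeal_comp_comp hY r.r r.i) (factorIdeal_comp_comp hZ s.r s.i)

theorem exists_retracts_of_isIdempotentElem [IsIdempotentComplete C] {X : C} {e : End X}
    (he : IsIdempotentElem e) :
    ∃ (Y Z : C) (r : Retract Y X) (s : Retract Z X),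
      r.r ≫ r.i = e ∧ r.r ≫ r.i + s.r ≫ s.i = 𝟙 X := by
  obtain ⟨Y, i, p, hip, hpi⟩ := IsIdempotentComplete.idempotents_split X e he
  obtain ⟨Z, j, q, hjq, hqj⟩ := IsIdempotentComplete.idempotents_split X (1 - e) he.one_sub
  exact ⟨Y, Z, ⟨i, p, hip⟩, ⟨j, q, hjq⟩, hpi, hpi.symm ▸ hqj.symm ▸ add_sub_cancel e 1⟩

end LocalEndomorphismRings

section MorphismCategory

variable {C : Type*} [Category C] [Preadditive C]

instance arrowHomSMul (k : Type*) [Semiring k] [Linear k C] (f g : Arrow C) : SMul k (f ⟶ g) where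
  smul c a := Arrow.homMk (c • a.left) (c • a.right) (by simp)

instance arrowLinear (k : Type*) [Semiring k] [Linear k C] : Linear k (Arrow C) where
  homModule f g := Function.Injective.module k
    (AddMonoidHom.mk' (fun a : f ⟶ g => (a.left, a.right)) fun _ _ => rfl)
    (fun _ _ h => Arrow.hom_ext _ _ (congrArg Prod.fst h) (congrArg Prod.snd h)) fun _ _ => rfl
  smul_comp _ _ _ _ _ _ := Arrow.hom_ext _ _ (Linear.smul_comp ..) (Linear.smul_comp ..)
  comp_smul _ _ _ _ _ _ := Arrow.hom_ext _ _ (Linear.comp_smul ..) (Linear.comp_smul ..)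

instance arrow_isIdempotentComplete [HasEqualizers C] : IsIdempotentComplete (Arrow C) :=
  have : HasEqualizers (Arrow C) := Arrow.hasLimitsOfShape
  (Idempotents.isIdempotentComplete_iff_hasEqualizer_of_id_and_idempotent _).2 inferInstance

variable [HasBinaryBiproducts C]

/-- The componentwise direct sum of morphisms, as a binary bicone in the morphism category. -/
noncomputable def arrowBiprodBicone (Y Z : Arrow C) : BinaryBicone Y Z where
  pt := arrowBiprod Y Z
  fst := Arrow.homMk biprod.fst biprod.fst (biprod.map_fst _ _).symm
  snd := Arrow.homMk biprod.snd biprod.snd (biprod.map_snd _ _).symm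
  inl := Arrow.homMk biprod.inl biprod.inl (biprod.inl_map _ _)
  inr := Arrow.homMk biprod.inr biprod.inr (biprod.inr_map _ _)
  inl_fst := Arrow.hom_ext _ _ biprod.inl_fst biprod.inl_fst
  inl_snd := Arrow.hom_ext _ _ biprod.inl_snd biprod.inl_snd
  inr_fst := Arrow.hom_ext _ _ biprod.inr_fst biprod.inr_fst
  inr_snd := Arrow.hom_ext _ _ biprod.inr_snd biprod.inr_snd

theorem arrowBiprodBicone_total (Y Z : Arrow C) :
    (arrowBiprodBicone Y Z).fst ≫ (arrowBiprodBicone Y Z).inl +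
      (arrowBiprodBicone Y Z).snd ≫ (arrowBiprodBicone Y Z).inr = 𝟙 _ :=
  Arrow.hom_ext _ _ biprod.total biprod.total

theorem nonempty_iso_arrowBiprod_iff {X Y Z : Arrow C} : Nonempty (X ≅ arrowBiprod Y Z) ↔
    ∃ (r : Retract Y X) (s : Retract Z X), r.r ≫ r.i + s.r ≫ s.i = 𝟙 X := by
  refine ⟨fun ⟨φ⟩ => exists_retracts_of_iso_binaryBicone (arrowBiprodBicone Y Z)
    (arrowBiprodBicone_total Y Z) φ, fun ⟨r, s, h⟩ => ?_⟩
  let b : BinaryBicone Y Z :=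
    ⟨X, r.r, s.r, r.i, s.i, r.retract, retract_i_comp_retract_r_eq_zero h,
      retract_i_comp_retract_r_eq_zero ((add_comm _ _).trans h), s.retract⟩
  exact ⟨(isBinaryBilimitOfTotal b h).isLimit.conePointUniqueUpToIso
    (isBinaryBilimitOfTotal (arrowBiprodBicone Y Z) (arrowBiprodBicone_total Y Z)).isLimit⟩

variable {P : Arrow C → Prop} {X : Arrow C}

theorem IndecArrowIn.of_hasTrivialIdempotents (hX : ¬ IsZero X)
    (h : HasTrivialIdempotents (End X)) : IndecArrowIn P X := by
  refine ⟨hX, fun Y Z _ _ hφ => or_iff_not_imp_left.2 fun hY => ?_⟩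
  obtain ⟨r, s, hrs⟩ := nonempty_iso_arrowBiprod_iff.1 hφ
  rw [h.retract_comp_eq_id r hY, add_eq_left] at hrs
  exact isZero_of_retract_comp_eq_zero s hrs

theorem IndecArrowIn.hasTrivialIdempotents [HasEqualizers C]
    (hP : ∀ Y, Retract Y X → P Y) (h : IndecArrowIn P X) : HasTrivialIdempotents (End X) := by
  intro e he
  obtain ⟨Y, Z, r, s, rfl, hrs⟩ := exists_retracts_of_isIdempotentElem he
  refine (h.2 Y Z (hP Y r) (hP Z s) (nonempty_iso_arrowBiprod_iff.2 ⟨r, s, hrs⟩)).imp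
    (fun hY => ?_) fun hZ => ?_
  · rw [hY.eq_zero_of_tgt r.r, zero_comp]
  · exact .trans (by rw [hZ.eq_zero_of_tgt s.r, zero_comp, add_zero]) hrs

theorem exists_finite_indecArrowIn_addHull (k : Type*) [Field k] [Linear k C]
    (hfin : ∀ Y, P Y → Module.Finite k (End Y)) (hX : P X) :
    ∃ S : Set (Arrow C), S.Finite ∧ (∀ M ∈ S, P M ∧ IndecArrowIn P M) ∧ addHull S X := by
  induction hd : Module.finrank k (End X) using Nat.strong_induction_on generalizing X with
  | _ d ih =>
    by_cases hindec : IndecArrowIn P X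
    · exact ⟨{X}, Set.finite_singleton X, by rintro _ rfl; exact ⟨hX, hindec⟩,
        addHull_of_mem rfl⟩
    by_cases h0 : IsZero X
    · refine ⟨∅, Set.finite_empty, by simp, ?_⟩
      rw [addHull, (IsZero.iff_id_eq_zero X).1 h0]
      exact zero_mem _
    have := hfin X hX
    simp only [IndecArrowIn, h0, not_false_eq_true, true_and, not_forall, not_or] at hindec
    obtain ⟨Y, Z, hY, hZ, hφ, hY0, hZ0⟩ := hindec
    obtain ⟨r, s, hrs⟩ := nonempty_iso_arrowBiprod_iff.1 hφ
    obtain ⟨S, hS, hSP, hYS⟩ := ih _ (hd ▸ finrank_end_lt_of_retract k r fun h => hZ0 <|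
      isZero_of_retract_comp_eq_zero s (by rwa [h, add_eq_left] at hrs)) hY rfl
    obtain ⟨T, hT, hTP, hZT⟩ := ih _ (hd ▸ finrank_end_lt_of_retract k s fun h => hY0 <|
      isZero_of_retract_comp_eq_zero r (by rwa [h, add_eq_right] at hrs)) hZ rfl
    refine ⟨S ∪ T, hS.union hT, fun M hM => hM.elim (hSP M) (hTP M), ?_⟩
    exact addHull_of_retracts hrs (addHull_mono Set.subset_union_left Y hYS)
      (addHull_mono Set.subset_union_right Z hZT)

-- Krull–Schmidt: an object with local endomorphism ring in `addHull S` is a summand of a member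
-- of `S`.
theorem HasFiniteAddGenerators.frtArrow [HasEqualizers C] (k : Type*) [Field k] [Linear k C]
    (hfin : ∀ Y, P Y → Module.Finite k (End Y)) (hret : ∀ Y Z, Retract Y Z → P Z → P Y)
    (hP : HasFiniteAddGenerators P) : FRTArrow P := by
  obtain ⟨S, hS, hSP, hPS⟩ := hP
  choose! T hT hTP hST using fun M hM => exists_finite_indecArrowIn_addHull k hfin (hSP M hM)
  have htriv {Y : Arrow C} (hY : P Y) (hYi : IndecArrowIn P Y) : HasTrivialIdempotents (End Y) :=
    hYi.hasTrivialIdempotents fun Z r => hret Z Y r hY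
  refine ⟨⋃ M ∈ S, T M, hS.biUnion hT, fun X hX hXi => ?_⟩
  have := hfin X hX
  have : Nontrivial (End X) := ⟨𝟙 X, 0, fun h => hXi.1 ((IsZero.iff_id_eq_zero X).2 h)⟩
  have : IsArtinianRing (End X) := .of_finite k _
  have := (htriv hX hXi).isLocalRing
  have hXT : addHull (⋃ M ∈ S, T M) X := factorIdeal_le_of_addHull
    (fun M hM => addHull_mono (Set.subset_biUnion_of_mem hM) M (hST M hM)) X X (hPS X hX)
  obtain ⟨N, hN, ⟨r⟩⟩ := exists_retract_of_addHull hXT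
  obtain ⟨M, hM, hNM⟩ := Set.mem_iUnion₂.1 hN
  obtain ⟨hNP, hNi⟩ := hTP M hM N hNM
  exact ⟨N, hN, ⟨r.i, r.r, r.retract, (htriv hNP hNi).retract_comp_eq_id r hXi.1⟩⟩

end MorphismCategory

section SMod

open scoped ModuleCat

variable {k Λ : Type} [Field k] [Ring Λ] [Algebra k Λ]

theorem sModObj_of_retract {X Y : Arrow (ModuleCat.{u} Λᵐᵒᵖ)} (r : Retract X Y)
    (hY : SModObj Λ Y) : SModObj Λ X := by
  obtain ⟨_, _, _⟩ := hY
  have hl : Function.Surjective r.r.left.hom := Function.HasRightInverse.surjective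
    ⟨_, ConcreteCategory.congr_hom (r.map Arrow.leftFunc).retract⟩
  have hr : Function.Surjective r.r.right.hom := Function.HasRightInverse.surjective
    ⟨_, ConcreteCategory.congr_hom (r.map Arrow.rightFunc).retract⟩
  have hmono : Mono (r.i.left ≫ Y.hom) := inferInstance
  refine ⟨.of_surjective _ hl, .of_surjective _ hr, ?_⟩
  rw [Arrow.w r.i] at hmono
  exact mono_of_mono X.hom r.i.right

theorem finite_end_of_sModObj [Module.Finite k Λ] {X : Arrow (ModuleCat.{u} Λᵐᵒᵖ)}
    (hX : SModObj Λ X) : Module.Finite k (End X) := by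
  obtain ⟨-, _, _⟩ := hX
  have : Module.Finite k Λᵐᵒᵖ := .equiv (MulOpposite.opLinearEquiv k)
  have : Module.Finite k X.right := .trans Λᵐᵒᵖ _
  let Φ : End X →ₗ[k] Module.End k X.right :=
    { toFun f := (Arrow.Hom.right f).hom.restrictScalars k
      map_add' _ _ := rfl
      map_smul' _ _ := rfl }
  refine Module.Finite.of_injective Φ fun f g h => arrow_hom_ext_of_mono_s18 ?_
  ext x
  exact LinearMap.congr_fun h x

theorem frtArrow_sModObj_of_le_five (k : Type) [Field k] {n : ℕ} (hn : n ≤ 5) :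
    FRTArrow (SModObj.{u} (lowerTriangularAlg k n)) :=
  (hasFiniteAddGenerators_sModObj k n (PosetRep.isFinite_grid k hn)).frtArrow k
    (fun _ => finite_end_of_sModObj) fun _ _ => sModObj_of_retract

end SMod

section FullyFaithful

variable {k : Type} [Field k] {n : ℕ} {W : Type u} [AddCommGroup W] [Module k W]

variable (k) in
/-- The embedding of `W` into `Rows n W` as the rows supported in position `j`. -/
def Rows.single (j : Fin n) : W →ₗ[k] Rows n W := LinearMap.single k (fun _ => W) j

theorem Rows.single_same (j : Fin n) (v : W) : Rows.single k j v j = v :=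
  Pi.single_eq_same (M := fun _ => W) j v

theorem Rows.single_of_ne {j l : Fin n} (h : l ≠ j) (v : W) : Rows.single k j v l = 0 :=
  Pi.single_eq_of_ne (M := fun _ => W) h v

theorem opElem_smul {i j : Fin n} (h : j ≤ i) (f : Rows n W) :
    opElem (k := k) i j • f = Rows.single k j (f i) := by
  funext l
  calc ∑ a, (opElem (k := k) i j).unop.1 a l • f a
      = (opElem (k := k) i j).unop.1 i l • f i :=
        Finset.sum_eq_single i (fun a _ ha => by simp [opElem, ha.symm]) (by simp)
    _ = Rows.single k j (f i) l := by
        rcases eq_or_ne l j with rfl | hl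
        · simp [opElem, h, Rows.single_same]
        · simp [opElem, hl.symm, Rows.single_of_ne hl]

variable {M N : PosetRep.{u} k (Fin 3 × (Fin n)ᵒᵈ)} {j : Fin n}

theorem single_mem_rowFlag {c : Fin 3} {v : M.V} :
    Rows.single k j v ∈ rowFlag M c ↔ v ∈ M.F (c, OrderDual.toDual j) := by
  refine ⟨fun h => Rows.single_same (k := k) j v ▸ mem_rowFlag.1 h j,
    fun h => mem_rowFlag.2 fun l => ?_⟩
  rcases eq_or_ne l j with rfl | hl
  · rwa [Rows.single_same]
  · rw [Rows.single_of_ne hl]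
    exact zero_mem _

/-- The class in `(gridToArrow k n).obj M` of the row with only nonzero entry `v`, in position
`j`. -/
def singleClass (v : M.F (2, OrderDual.toDual j)) : ((gridToArrow k n).obj M).right :=
  subquotientMk (rowFlag M) ⟨Rows.single k j v.1, single_mem_rowFlag.2 v.2⟩

theorem singleClass_add (v w : M.F (2, OrderDual.toDual j)) :
    singleClass (v + w) = singleClass v + singleClass w :=
  (congrArg (subquotientMk _) (Subtype.ext (map_add (Rows.single k j) v.1 w.1))).trans
    (map_add (subquotientMk (rowFlag M)) _ _)

theorem singleClass_smul (c : k) (v : M.F (2, OrderDual.toDual j)) :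
    singleClass (c • v) = algebraMap k (OpLowerTriangular k n) c • singleClass v :=
  (congrArg (subquotientMk _) (Subtype.ext ((map_smul (Rows.single k j) c v.1).trans
    (algebraMap_smul (OpLowerTriangular k n) c (Rows.single k j v.1)).symm))).trans
      (map_smul (subquotientMk (rowFlag M)) _ _)

theorem singleClass_mem_range {v : M.F (2, OrderDual.toDual j)} :
    singleClass v ∈ LinearMap.range ((gridToArrow k n).obj M).hom.hom ↔
      v.1 ∈ M.F (1, OrderDual.toDual j) :=
  subquotientMk_mem_range.trans single_mem_rowFlag

theorem singleClass_eq_zero {v : M.F (2, OrderDual.toDual j)} :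
    singleClass v = 0 ↔ v.1 ∈ M.F (0, OrderDual.toDual j) :=
  subquotientMk_eq_zero.trans single_mem_rowFlag

theorem singleClass_injective (h : M.F (0, OrderDual.toDual j) = ⊥) :
    Function.Injective (singleClass (M := M) (j := j)) := fun v w hvw => by
  have hsub : singleClass (v - w) + singleClass w = singleClass w := by
    rw [← singleClass_add, sub_add_cancel, hvw]
  rw [add_eq_right, singleClass_eq_zero, h, Submodule.mem_bot] at hsub
  exact sub_eq_zero.1 (Subtype.ext hsub)

theorem opElem_smul_singleClass {i : Fin n} (h : j ≤ i) (v : M.F (2, OrderDual.toDual i)) :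
    opElem (k := k) i j • singleClass v =
      singleClass ⟨v.1, M.F.mono (Prod.mk_le_mk.2 ⟨le_rfl, h⟩) v.2⟩ := by
  refine (map_smul (subquotientMk (rowFlag M)) _ _).symm.trans
    (congrArg (subquotientMk _) (Subtype.ext ((opElem_smul h _).trans ?_)))
  exact congrArg (Rows.single k j) (Rows.single_same i v.1)

theorem exists_singleClass_eq (j : Fin n) (z : ((gridToArrow k n).obj M).right) :
    ∃ v : M.F (2, OrderDual.toDual j), singleClass v = opElem (k := k) j j • z := by
  obtain ⟨x, rfl⟩ := subquotientMk_surjective z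
  exact ⟨⟨x.1 j, mem_rowFlag.1 x.2 j⟩,
    (congrArg (subquotientMk _) (Subtype.ext (opElem_smul le_rfl x.1).symm)).trans
      (map_smul (subquotientMk (rowFlag M)) _ _)⟩

theorem exists_right_singleClass (θ : (gridToArrow k n).obj M ⟶ (gridToArrow k n).obj N)
    (v : M.F (2, OrderDual.toDual j)) :
    ∃ w : N.F (2, OrderDual.toDual j), singleClass w = θ.right (singleClass v) := by
  obtain ⟨w, hw⟩ := exists_singleClass_eq j (θ.right (singleClass v))
  exact ⟨w, by rw [hw, ← map_smul, opElem_smul_singleClass le_rfl]⟩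

theorem gridToArrow_map_singleClass (f : M ⟶ N) (v : M.F (2, OrderDual.toDual j)) :
    ((gridToArrow k n).map f).right (singleClass v) =
      singleClass ⟨PosetRep.toLin f v, PosetRep.toLin_mem f _ v.2⟩ := by
  refine congrArg (subquotientMk (rowFlag N)) (Subtype.ext (funext fun l => ?_))
  exact (Pi.apply_single (fun _ => PosetRep.toLin f) (fun _ => map_zero _) j v.1 l)

theorem gridToArrow_hom_ext {θ θ' : (gridToArrow k n).obj M ⟶ (gridToArrow k n).obj N}
    (h : ∀ j (v : M.F (2, OrderDual.toDual j)),
      θ.right (singleClass v) = θ'.right (singleClass v)) : θ = θ' := by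
  refine arrow_hom_ext_of_mono_s18 (ModuleCat.hom_ext (LinearMap.ext fun z => ?_))
  rw [← one_smul (OpLowerTriangular k n) z, ← sum_opElem_self, Finset.sum_smul, map_sum, map_sum]
  refine Finset.sum_congr rfl fun j _ => ?_
  obtain ⟨v, hv⟩ := exists_singleClass_eq j z
  rw [← hv]
  exact h j v

theorem gridToArrow_map_injective (h : M.F (2, OrderDual.toDual j) = ⊤)
    (h' : N.F (0, OrderDual.toDual j) = ⊥) :
    Function.Injective ((gridToArrow k n).map : (M ⟶ N) → _) := fun f g hfg => by
  ext v
  have hv := gridToArrow_map_singleClass f (⟨v, h.ge trivial⟩ : M.F (2, OrderDual.toDual j))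
  rw [hfg, gridToArrow_map_singleClass] at hv
  exact congrArg Subtype.val (singleClass_injective h' hv).symm

theorem exists_lift_of_gridToArrow_hom (h : M.F (2, OrderDual.toDual j) = ⊤)
    (h' : N.F (0, OrderDual.toDual j) = ⊥)
    (θ : (gridToArrow k n).obj M ⟶ (gridToArrow k n).obj N) :
    ∃ f : M.V →ₗ[k] N.V, ∀ i (v : M.F (2, OrderDual.toDual i)),
      ∃ hv : f v ∈ N.F (2, OrderDual.toDual i),
        θ.right (singleClass v) = singleClass ⟨f v, hv⟩ := by
  choose w hw using fun v : M.V =>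
    exists_right_singleClass θ (⟨v, h.ge trivial⟩ : M.F (2, OrderDual.toDual j))
  let f : M.V →ₗ[k] N.V :=
    { toFun v := (w v).1
      map_add' v v' := congrArg Subtype.val <| singleClass_injective h' (a₂ := w v + w v') <| by
        rw [singleClass_add, hw, hw, hw, ← map_add, ← singleClass_add]
        rfl
      map_smul' c v := congrArg Subtype.val <| singleClass_injective h' (a₂ := c • w v) <| by
        rw [singleClass_smul, hw, hw, ← map_smul, ← singleClass_smul]
        rfl }
  refine ⟨f, fun i v => ?_⟩
  rcases le_total i j with hij | hij
  · have hwi := opElem_smul_singleClass hij (w v)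
    rw [hw, ← map_smul, opElem_smul_singleClass hij] at hwi
    exact ⟨_, hwi⟩
  · obtain ⟨v', hv'⟩ := exists_right_singleClass θ v
    have hv'j := opElem_smul_singleClass hij v'
    rw [hv', ← map_smul, opElem_smul_singleClass hij] at hv'j
    have hfv : f v = v' := congrArg Subtype.val (singleClass_injective h' ((hw v).trans hv'j))
    exact ⟨hfv ▸ v'.2, by rw [← hv']; exact congrArg _ (Subtype.ext hfv.symm)⟩

theorem gridToArrow_map_surjective (h : M.F (2, OrderDual.toDual j) = ⊤)
    (h' : N.F (0, OrderDual.toDual j) = ⊥) :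
    Function.Surjective ((gridToArrow k n).map : (M ⟶ N) → _) := fun θ => by
  obtain ⟨f, hf⟩ := exists_lift_of_gridToArrow_hom h h' θ
  have hfF : ∀ a, ∀ v ∈ M.F a, f v ∈ N.F a := by
    rintro ⟨c, i⟩ v hv
    have hv2 : v ∈ M.F (2, i) := M.F.mono (Prod.mk_le_mk.2 ⟨Fin.le_last c, le_rfl⟩) hv
    obtain ⟨hfv, hθ⟩ := hf (OrderDual.ofDual i) ⟨v, hv2⟩
    fin_cases c
    · exact singleClass_eq_zero.1 (by rw [← hθ, singleClass_eq_zero.2 hv, map_zero])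
    · exact singleClass_mem_range.1
        (hθ ▸ arrow_right_mem_range θ ((singleClass_mem_range (v := ⟨v, hv2⟩)).2 hv))
    · exact hfv
  refine ⟨PosetRep.homMk f hfF, gridToArrow_hom_ext fun i v => ?_⟩
  rw [gridToArrow_map_singleClass]
  exact (hf i v).2.symm

end FullyFaithful

theorem PosetRep.finrank_eq_of_iso {k : Type} [Field k] {α : Type*} [Preorder α]
    {M N : PosetRep.{u} k α} (e : M ≅ N) : Module.finrank k M.V = Module.finrank k N.V :=
  (LinearEquiv.ofLinearMap (PosetRep.toLin e.hom) (PosetRep.toLin e.inv)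
    (congrArg PosetRep.toLin e.inv_hom_id) (congrArg PosetRep.toLin e.hom_inv_id)).finrank_eq

section Iso

variable {k : Type} [Field k] {n : ℕ} {M N : PosetRep.{u} k (Fin 3 × (Fin n)ᵒᵈ)} {j : Fin n}

theorem nonempty_iso_of_gridToArrow_iso (hM : M.F (2, OrderDual.toDual j) = ⊤)
    (hM' : M.F (0, OrderDual.toDual j) = ⊥) (hN : N.F (2, OrderDual.toDual j) = ⊤)
    (hN' : N.F (0, OrderDual.toDual j) = ⊥)
    (e : (gridToArrow k n).obj M ≅ (gridToArrow k n).obj N) : Nonempty (M ≅ N) := by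
  obtain ⟨f, hf⟩ := gridToArrow_map_surjective hM hN' e.hom
  obtain ⟨g, hg⟩ := gridToArrow_map_surjective hN hM' e.inv
  exact ⟨⟨f, g, gridToArrow_map_injective hM hM' (by rw [Functor.map_comp, hf, hg]; simp),
    gridToArrow_map_injective hN hN' (by rw [Functor.map_comp, hf, hg]; simp)⟩⟩

theorem indecArrowIn_gridToArrow [Nontrivial M.V] (hM : M.F (2, OrderDual.toDual j) = ⊤)
    (hM' : M.F (0, OrderDual.toDual j) = ⊥) (h : HasTrivialIdempotents (End M))
    {P : Arrow (ModuleCat.{u} (OpLowerTriangular k n)) → Prop} :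
    IndecArrowIn P ((gridToArrow k n).obj M) := by
  have hinj := gridToArrow_map_injective hM hM'
  refine .of_hasTrivialIdempotents (fun h0 => ?_) fun e he => ?_
  · obtain ⟨v, hv⟩ := exists_ne (0 : M.V)
    have hid : 𝟙 M = 0 := hinj (h0.eq_of_src _ _)
    exact hv (congrArg (fun f : M ⟶ M => PosetRep.toLin f v) hid)
  · obtain ⟨f, rfl⟩ := gridToArrow_map_surjective hM hM' e
    have hf : f ≫ f = f := hinj ((Functor.map_comp _ _ _).trans he)
    exact (h f hf).imp
      (fun h0 => (congrArg (gridToArrow k n).map h0).trans (Functor.map_zero _ _ _))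
      (fun h1 => (congrArg (gridToArrow k n).map h1).trans ((gridToArrow k n).map_id M))

end Iso

section EndoRep

variable {k : Type} [Field k] {W : Type u} [AddCommGroup W] [Module k W]

/-- The subspace of `W × W × W` spanned by the factors whose proposition holds. -/
def coordSubspace (k : Type) [Field k] (W : Type u) [AddCommGroup W] [Module k W] (p q r : Prop) :
    Submodule k (W × W × W) :=
  (⨆ _ : p, ⊤ : Submodule k W).prod ((⨆ _ : q, ⊤ : Submodule k W).prod (⨆ _ : r, ⊤))

theorem mem_iSup_prop_top {p : Prop} {x : W} :
    x ∈ (⨆ _ : p, ⊤ : Submodule k W) ↔ p ∨ x = 0 := by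
  by_cases h : p <;> simp [h]

theorem mem_coordSubspace {p q r : Prop} {x : W × W × W} : x ∈ coordSubspace k W p q r ↔
    (p ∨ x.1 = 0) ∧ (q ∨ x.2.1 = 0) ∧ (r ∨ x.2.2 = 0) := by
  simp only [coordSubspace, Submodule.mem_prod, mem_iSup_prop_top]

theorem coordSubspace_mono {p q r p' q' r' : Prop} (hp : p → p') (hq : q → q') (hr : r → r') :
    coordSubspace k W p q r ≤ coordSubspace k W p' q' r' := fun x hx => by
  rw [mem_coordSubspace] at hx ⊢
  exact ⟨hx.1.imp_left hp, hx.2.1.imp_left hq, hx.2.2.imp_left hr⟩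

/-- The map `(a, b) ↦ (a + T b, a + b, a)`. -/
def endoMap (T : Module.End k W) : W × W →ₗ[k] W × W × W :=
  (LinearMap.fst k W W + T ∘ₗ LinearMap.snd k W W).prod
    ((LinearMap.fst k W W + LinearMap.snd k W W).prod (LinearMap.fst k W W))

theorem endoMap_apply (T : Module.End k W) (a b : W) : endoMap T (a, b) = (a + T b, a + b, a) :=
  rfl

/-- The flag `K j ≤ Q j ≤ P j` in position `j` of the representation of the grid attached to an
endomorphism `T`; the subspaces `K j` and `P j` do not depend on `T`. -/
def endoFlag (T : Module.End k W) (j : ℕ) : Fin 3 → Submodule k (W × W × W) :=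
  ![coordSubspace k W False (j ≤ 0) (j ≤ 1),
    coordSubspace k W False (j ≤ 0) (j ≤ 1) ⊔
      ((⨆ _ : j ≤ 3, ⊤ : Submodule k W).prod (⨆ _ : j ≤ 2, ⊤)).map (endoMap T),
    coordSubspace k W (j ≤ 5) (j ≤ 4) (j ≤ 3)]

theorem endoFlag_monotone (T : Module.End k W) (j : ℕ) : Monotone (endoFlag T j) := by
  rw [Fin.monotone_iff_le_succ]
  intro i
  fin_cases i
  · exact le_sup_left
  · refine sup_le (coordSubspace_mono False.elim (by lia) (by lia)) ?_
    rintro _ ⟨⟨a, b⟩, hab, rfl⟩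
    simp only [SetLike.mem_coe, Submodule.mem_prod, mem_iSup_prop_top] at hab
    change _ ∈ coordSubspace k W _ _ _
    rw [endoMap_apply, mem_coordSubspace]
    grind

theorem endoFlag_antitone (T : Module.End k W) (c : Fin 3) : Antitone (endoFlag T · c) := by
  intro j j' h
  have hle {m : ℕ} (hj : j' ≤ m) : j ≤ m := h.trans hj
  fin_cases c
  · exact coordSubspace_mono id hle hle
  · exact sup_le_sup (coordSubspace_mono id hle hle) (Submodule.map_mono (Submodule.prod_mono
      (iSup_mono' fun hj => ⟨hle hj, le_rfl⟩) (iSup_mono' fun hj => ⟨hle hj, le_rfl⟩)))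
  · exact coordSubspace_mono hle hle hle

theorem mem_endoFlag_one {T : Module.End k W} {j : ℕ} (hj : 2 ≤ j) {x : W × W × W} :
    x ∈ endoFlag T j 1 ↔
      ∃ a b, (j ≤ 3 ∨ a = 0) ∧ (j ≤ 2 ∨ b = 0) ∧ (a + T b, a + b, a) = x := by
  have hK : coordSubspace k W False (j ≤ 0) (j ≤ 1) = ⊥ := by
    simp [coordSubspace, show ¬ j ≤ 0 by lia, show ¬ j ≤ 1 by lia]
  change x ∈ coordSubspace k W _ _ _ ⊔ _ ↔ _
  rw [hK, bot_sup_eq, Submodule.mem_map]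
  simp only [Prod.exists, Submodule.mem_prod, mem_iSup_prop_top, endoMap_apply, and_assoc]

section

variable {T : Module.End k W} {f : Module.End k (W × W × W)}
  (hf : ∀ j ≤ 5, ∀ c, ∀ x ∈ endoFlag T j c, f x ∈ endoFlag T j c)

include hf

theorem apply_eq_of_endoFlag (a b c : W) :
    f (a, b, c) = ((f (a, 0, 0)).1, (f (0, b, 0)).2.1, (f (0, 0, c)).2.2) := by
  have hK (j) (hj : j ≤ 5) (x) (hx : x ∈ coordSubspace k W False (j ≤ 0) (j ≤ 1)) :
      f x ∈ coordSubspace k W False (j ≤ 0) (j ≤ 1) := hf j hj 0 x hx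
  have hP (j) (hj : j ≤ 5) (x) (hx : x ∈ coordSubspace k W (j ≤ 5) (j ≤ 4) (j ≤ 3)) :
      f x ∈ coordSubspace k W (j ≤ 5) (j ≤ 4) (j ≤ 3) := hf j hj 2 x hx
  simp only [mem_coordSubspace] at hK hP
  have h1 : (f (a, 0, 0)).2.1 = 0 ∧ (f (a, 0, 0)).2.2 = 0 := by simpa using hP 5 le_rfl (a, 0, 0)
  have h2 : (f (0, b, 0)).1 = 0 ∧ (f (0, b, 0)).2.2 = 0 :=
    ⟨by simpa using hK 0 (by lia) (0, b, 0), by simpa using hP 4 (by lia) (0, b, 0)⟩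
  have h3 : (f (0, 0, c)).1 = 0 ∧ (f (0, 0, c)).2.1 = 0 := by
    simpa using hK 1 (by lia) (0, 0, c)
  have habc : (a, b, c) = (a, 0, 0) + ((0, b, 0) + (0, 0, c)) := by simp
  rw [habc, map_add, map_add]
  ext <;> simp [h1, h2, h3]

theorem exists_commute_of_endoFlag :
    ∃ φ : Module.End k W, φ * T = T * φ ∧ f = φ.prodMap (φ.prodMap φ) := by
  let φ : Module.End k W := LinearMap.fst k W _ ∘ₗ f ∘ₗ LinearMap.inl k W _
  have hdiag (a) : (f (0, a, 0)).2.1 = φ a ∧ (f (0, 0, a)).2.2 = φ a := by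
    have hfa := hf 3 (by lia) 1 (a, a, a) ((mem_endoFlag_one (by lia)).2 ⟨a, 0, by simp⟩)
    obtain ⟨a', b', -, hb, hab⟩ := (mem_endoFlag_one (by lia)).1 hfa
    obtain rfl : b' = 0 := by simpa using hb
    rw [apply_eq_of_endoFlag hf] at hab
    simp only [map_zero, add_zero, Prod.mk.injEq] at hab
    exact ⟨hab.2.1.symm.trans hab.1, hab.2.2.symm.trans hab.1⟩
  have hfφ (a b c) : f (a, b, c) = (φ a, φ b, φ c) := by
    rw [apply_eq_of_endoFlag hf, (hdiag b).1, (hdiag c).2]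
    rfl
  refine ⟨φ, LinearMap.ext fun b => ?_, LinearMap.ext fun x => hfφ _ _ _⟩
  have hfb := hf 2 (by lia) 1 (T b, b, 0) ((mem_endoFlag_one le_rfl).2 ⟨0, b, by simp⟩)
  obtain ⟨a', b', -, -, hab⟩ := (mem_endoFlag_one le_rfl).1 hfb
  rw [hfφ, map_zero, Prod.mk.injEq, Prod.mk.injEq] at hab
  obtain ⟨hT, hb, rfl⟩ := hab
  rw [zero_add] at hT hb
  subst hb
  exact hT.symm

end

/-- The representation of the grid attached to an endomorphism `T` of `W`; for `6 ≤ n` it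
encodes `T` faithfully. -/
def endoRep [Module.Finite k W] (n : ℕ) (T : Module.End k W) :
    PosetRep.{u} k (Fin 3 × (Fin n)ᵒᵈ) where
  V := W × W × W
  F := ⟨fun a => endoFlag T (OrderDual.ofDual a.2 : Fin n) a.1, fun _ b h =>
    (endoFlag_monotone T _ h.1).trans (endoFlag_antitone T b.1 h.2)⟩

variable [Module.Finite k W] {n : ℕ} (hn : 6 ≤ n) (T : Module.End k W)

include hn

theorem endoRep_eq_top : (endoRep n T).F (2, OrderDual.toDual ⟨3, by lia⟩) = ⊤ := by
  change coordSubspace k W (3 ≤ 5) (3 ≤ 4) (3 ≤ 3) = ⊤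
  simp [coordSubspace]

theorem endoRep_eq_bot : (endoRep n T).F (0, OrderDual.toDual ⟨3, by lia⟩) = ⊥ := by
  change coordSubspace k W False (3 ≤ 0) (3 ≤ 1) = ⊥
  simp [coordSubspace]

theorem hasTrivialIdempotents_end_endoRep
    (hT : HasTrivialIdempotents (Subalgebra.centralizer k {T})) :
    HasTrivialIdempotents (End (endoRep n T)) := fun e he => by
  obtain ⟨φ, hφT, hφ⟩ := exists_commute_of_endoFlag (T := T) (f := PosetRep.toLin e)
    fun j hj c _ => PosetRep.toLin_mem e (c, OrderDual.toDual ⟨j, by lia⟩)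
  have heφ (x : W × W × W) : PosetRep.toLin e x = (φ x.1, φ x.2.1, φ x.2.2) :=
    LinearMap.congr_fun hφ x
  have hφφ : φ * φ = φ := LinearMap.ext fun a => by
    have hea : PosetRep.toLin e (PosetRep.toLin e (a, 0, 0)) = PosetRep.toLin e (a, 0, 0) :=
      congrArg (fun f : End (endoRep n T) => PosetRep.toLin f (a, 0, 0)) he
    rw [heφ, heφ] at hea
    exact congrArg Prod.fst hea
  have hφ01 := hT ⟨φ, (Subalgebra.mem_centralizer_iff k).2 fun _ h => h ▸ hφT.symm⟩
    (Subtype.ext hφφ)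
  refine hφ01.imp (fun h0 => PosetRep.hom_ext fun x => ?_) fun h1 => PosetRep.hom_ext fun x => ?_
  · obtain rfl : φ = 0 := congrArg Subtype.val h0
    exact heφ x
  · obtain rfl : φ = 1 := congrArg Subtype.val h1
    exact heφ x

end EndoRep

section JordanBlocks

open Polynomial

variable {k : Type} [Field k]

theorem HasTrivialIdempotents.centralizer_mulLeft {A : Type*} [CommRing A] [Algebra k A]
    {p : k[X] →ₐ[k] A} (hp : Function.Surjective p) (h : HasTrivialIdempotents A) :
    HasTrivialIdempotents (Subalgebra.centralizer k {LinearMap.mulLeft k (p X)}) := by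
  rintro ⟨φ, hφ⟩ he
  have hX (b : A) : φ (p X * b) = p X * φ b :=
    (LinearMap.congr_fun ((Subalgebra.mem_centralizer_iff k).1 hφ _ rfl) b).symm
  have hmul (q : k[X]) (b : A) : φ (p q * b) = p q * φ b := by
    induction q using Polynomial.induction_on generalizing b with
    | C c => rw [← algebraMap_eq, p.commutes, ← Algebra.smul_def, map_smul, Algebra.smul_def]
    | add q r hq hr => rw [map_add, add_mul, add_mul, map_add, hq, hr]
    | monomial m c ih =>
      rw [pow_succ, ← mul_assoc, map_mul p, mul_assoc, ih, hX, mul_assoc]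
  have hφ1 (a : A) : φ a = a * φ 1 := by
    obtain ⟨q, rfl⟩ := hp a
    rw [← hmul, mul_one]
  have hidem : φ 1 * φ 1 = φ 1 := by
    rw [← hφ1]
    exact LinearMap.congr_fun (congrArg Subtype.val he) 1
  refine (h _ hidem).imp (fun h0 => ?_) fun h1 => ?_
  · exact Subtype.ext (LinearMap.ext fun a => by simp [hφ1 a, h0])
  · exact Subtype.ext (LinearMap.ext fun a => by simp [hφ1 a, h1])

theorem hasTrivialIdempotents_of_irreducible_pow {R A : Type*} [CommRing R]
    [IsPrincipalIdealRing R] [CommRing A] {π : R} (hπ : Irreducible π) {m : ℕ} {p : R →+* A}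
    (hp : Function.Surjective p) (h : ∀ q, p q = 0 ↔ π ^ m ∣ q) :
    HasTrivialIdempotents A := fun e he => by
  obtain ⟨q, rfl⟩ := hp e
  have hdvd : π ^ m ∣ q * (1 - q) := by
    rw [← h, map_mul, map_sub, map_one, mul_sub, mul_one, he.eq, sub_self]
  by_cases hq : π ∣ q
  · obtain ⟨r, rfl⟩ := hq
    have hcoprime : IsCoprime π (1 - π * r) := ⟨r, 1, by ring⟩
    exact .inl ((h _).2 (hcoprime.pow_left.dvd_of_dvd_mul_right hdvd))
  · have hcoprime : IsCoprime π q := hπ.coprime_iff_not_dvd.2 hq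
    have hp1 : p (1 - q) = 0 := (h _).2 (hcoprime.pow_left.dvd_of_dvd_mul_left hdvd)
    rw [map_sub, map_one, sub_eq_zero] at hp1
    exact .inr hp1.symm

theorem exists_hasTrivialIdempotents_centralizer (k : Type) [Field k] (m : ℕ) :
    ∃ (W : Type u) (_ : AddCommGroup W) (_ : Module k W) (_ : Module.Finite k W)
      (T : Module.End k W), Module.finrank k W = m ∧
        HasTrivialIdempotents (Subalgebra.centralizer k {T}) := by
  have hm : (X ^ m : k[X]) ≠ 0 := pow_ne_zero m X_ne_zero
  let b := AdjoinRoot.powerBasis hm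
  have := b.finite
  let e : AdjoinRoot (X ^ m : k[X]) ≃ₐ[k] ULift.{u} (AdjoinRoot (X ^ m : k[X])) :=
    ULift.algEquiv.symm
  let p := e.toAlgHom.comp (AdjoinRoot.mkₐ _)
  have hp : Function.Surjective p := e.surjective.comp AdjoinRoot.mk_surjective
  have hker (q : k[X]) : p q = 0 ↔ X ^ m ∣ q :=
    (map_eq_zero_iff e e.injective).trans AdjoinRoot.mk_eq_zero
  refine ⟨ULift.{u} (AdjoinRoot (X ^ m : k[X])), inferInstance, inferInstance,
    .equiv e.toLinearEquiv, LinearMap.mulLeft k (p X), ?_, ?_⟩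
  · rw [← e.toLinearEquiv.finrank_eq, b.finrank, AdjoinRoot.powerBasis_dim, natDegree_X_pow]
  · exact (hasTrivialIdempotents_of_irreducible_pow irreducible_X hp hker).centralizer_mulLeft hp

end JordanBlocks

theorem not_frtArrow_of_infinite {C ι : Type*} [Category C] [Preadditive C]
    [HasBinaryBiproducts C] [Infinite ι] {P : Arrow C → Prop} (X : ι → Arrow C)
    (hP : ∀ i, P (X i)) (hX : ∀ i, IndecArrowIn P (X i))
    (h : ∀ i j, Nonempty (X i ≅ X j) → i = j) : ¬ FRTArrow P := by
  rintro ⟨s, hs, hsX⟩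
  have : Finite s := hs
  choose Y hYs e using fun i => hsX (X i) (hP i) (hX i)
  obtain ⟨i, j, hij, hY⟩ :=
    Finite.exists_ne_map_eq_of_infinite fun i => (⟨Y i, hYs i⟩ : s)
  obtain ⟨ei⟩ := e i
  obtain ⟨ej⟩ := e j
  exact hij (h i j ⟨ei ≪≫ eqToIso (congrArg Subtype.val hY) ≪≫ ej.symm⟩)

theorem not_frtArrow_sModObj_of_six_le (k : Type) [Field k] {n : ℕ} (hn : 6 ≤ n) :
    ¬ FRTArrow (SModObj.{u} (lowerTriangularAlg k n)) := by
  choose W _ _ _ T hW hT using fun m : ℕ => exists_hasTrivialIdempotents_centralizer.{u} k (m + 1)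
  refine not_frtArrow_of_infinite (fun m => (gridToArrow k n).obj (endoRep n (T m)))
    (fun m => sModObj_gridToArrow _) (fun m => ?_) fun i j ⟨e⟩ => ?_
  · have : Nontrivial (W m) := Module.nontrivial_of_finrank_pos (R := k) (hW m ▸ m.succ_pos)
    have : Nontrivial (endoRep n (T m)).V := inferInstanceAs (Nontrivial (W m × W m × W m))
    exact indecArrowIn_gridToArrow (endoRep_eq_top hn _) (endoRep_eq_bot hn _)
      (hasTrivialIdempotents_end_endoRep hn _ (hT m))
  · obtain ⟨e'⟩ := nonempty_iso_of_gridToArrow_iso (endoRep_eq_top hn _) (endoRep_eq_bot hn _)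
      (endoRep_eq_top hn _) (endoRep_eq_bot hn _) e
    have hV : Module.finrank k (W i × W i × W i) = Module.finrank k (W j × W j × W j) :=
      PosetRep.finrank_eq_of_iso e'
    simp only [Module.finrank_prod, hW] at hV
    lia

theorem stmt18_general (k : Type) [Field k] (n : ℕ) :
    FRTArrow (SModObj.{u} (lowerTriangularAlg k n)) ↔ n ≤ 5 :=
  ⟨fun h => not_lt.1 fun hn => not_frtArrow_sModObj_of_six_le k hn h,
    frtArrow_sModObj_of_le_five k⟩

/-- Let `k` be an algebraically closed field of characteristic
different from `2`, `n ≥ 1`, and `T_n(k)` the algebra of lower triangular `n × n`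
matrices over `k`.  Then the monomorphism category `S(mod T_n(k))` is of finite
representation type if and only if `n ≤ 5`. -/
theorem stmt18 (k : Type) [Field k] [IsAlgClosed k] (h2 : (2 : k) ≠ 0)
    (n : ℕ) (hn : 1 ≤ n) :
    FRTArrow (SModObj (lowerTriangularAlg k n)) ↔ n ≤ 5 :=
  stmt18_general k n
end
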